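/- Let k be an algebraically closed field of characteristic p, where p is an odd prime, let t > 2 be an integer not divisible by p, let n = p + t, let a be a nonzero element of k, and let s be a positive integer. Then the polynomial f = Y^n - a·X^s·Y^t + 1 over the rational function field k(X) has n distinct roots in a splitting field, and the image of its Galois group in the group of permutations of this set of roots is exactly the alternating group on those n roots. -/

import Mathlib

open Polynomial

open scoped Classical

/-!
Put `T = a * X ^ s`, so that the polynomial is the trinomial `f = Y ^ n - T * Y ^ t + 1`, and let
`G` be its Galois group over `k(T)`. In characteristic `p` we have `Y * f' = t * (f - 1)`, so `f` is
separable and its discriminant is `± t ^ n`, a square in `k`; hence `G` consists of even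
permutations.

Two distinct roots `y` and `z` satisfy a relation between `z / y` and `y` alone, which is an
Eisenstein equation over `k(z / y)`. So all fields `k(y, z)` are isomorphic over `k(T)`, which means
that `G` is doubly transitive. Over the completion `k((u))` at `T = ∞`, with `T = u ^ (-t)`,
Hensel's lemma makes `t` of the roots rational, while the other `p` are wildly ramified, so `G`
contains a `p`-cycle. A primitive group containing a cycle of prime length with at least three fixed
points contains the alternating group (Jordan), so `G` is the alternating group.

Passing from `k(T)` to `k(X)` does not shrink `G`: all automorphisms over `k(T)` multiply `X` by
constants, so they commute on `k(X)` and every commutator of elements of `G` comes from an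
automorphism over `k(X)`; and the alternating group is perfect for `n ≥ 5`.
-/

open scoped Pointwise commutatorElement

theorem exists_conj_mem_zpowers_of_orderOf_eq {G : Type*} [Group G] [Finite G] {p : ℕ}
    (hp : p.Prime) (hG : ¬ p ^ 2 ∣ Nat.card G) {x y : G} (hx : orderOf x = p)
    (hy : orderOf y = p) : ∃ u : G, u * y * u⁻¹ ∈ Subgroup.zpowers x := by
  have : Fact p.Prime := ⟨hp⟩
  have hne : Nat.card G ≠ 0 := Nat.card_pos.ne'
  have hfac : (Nat.card G).factorization p = 1 := by
    refine le_antisymm (not_lt.1 fun h => hG ((hp.pow_dvd_iff_le_factorization hne).2 h))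
      ((hp.dvd_iff_one_le_factorization hne).1 (hx ▸ orderOf_dvd_natCard x))
  let P : Sylow p G :=
    Sylow.ofCard (Subgroup.zpowers x) (by rw [hfac, Nat.card_zpowers, hx, pow_one])
  let Q : Sylow p G :=
    Sylow.ofCard (Subgroup.zpowers y) (by rw [hfac, Nat.card_zpowers, hy, pow_one])
  obtain ⟨u, hu⟩ := MulAction.exists_smul_eq G Q P
  refine ⟨u, ?_⟩
  have hconj : MulAut.conj u • Subgroup.zpowers y = Subgroup.zpowers x :=
    congrArg Sylow.toSubgroup hu
  rw [← hconj]
  exact Subgroup.smul_mem_pointwise_smul y (MulAut.conj u) _ (Subgroup.mem_zpowers y)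

theorem commute_commutatorElement_inv_of_conj_mem_zpowers {G : Type*} [Group G] {g x y : G}
    (hx : x * g * x⁻¹ ∈ Subgroup.zpowers g) (hy : y * g * y⁻¹ ∈ Subgroup.zpowers g) :
    Commute ⁅x⁻¹, y⁻¹⁆ g := by
  obtain ⟨i, hi⟩ := hx
  obtain ⟨j, hj⟩ := hy
  have hxpow (l : ℤ) : x * g ^ l * x⁻¹ = g ^ (i * l) := by
    rw [← conj_zpow, ← hi]; exact (zpow_mul g i l).symm
  have hypow (l : ℤ) : y * g ^ l * y⁻¹ = g ^ (j * l) := by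
    rw [← conj_zpow, ← hj]; exact (zpow_mul g j l).symm
  have hxy : (x * y) * g * (x * y)⁻¹ = (y * x) * g * (y * x)⁻¹ := calc
    _ = x * (y * g * y⁻¹) * x⁻¹ := by group
    _ = y * (x * g * x⁻¹) * y⁻¹ := by rw [← hi, ← hj]; simp only [hxpow, hypow, mul_comm]
    _ = _ := by group
  calc ⁅x⁻¹, y⁻¹⁆ * g = (y * x)⁻¹ * ((x * y) * g * (x * y)⁻¹) * (x * y) := by
        rw [commutatorElement_def]; group
    _ = g * ⁅x⁻¹, y⁻¹⁆ := by rw [hxy, commutatorElement_def]; group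

theorem commutatorElement_mul_mul_of_commute {G : Type*} [Group G] {x₁ x₂ y₁ y₂ : G}
    (h₁₁ : Commute x₁ y₁) (h₁₂ : Commute x₁ y₂) (h₂₁ : Commute x₂ y₁) (h₂₂ : Commute x₂ y₂) :
    ⁅x₁ * y₁, x₂ * y₂⁆ = ⁅x₁, x₂⁆ * ⁅y₁, y₂⁆ := by
  have hcomm : Commute (⁅y₁, y₂⁆) (x₂ * x₁)⁻¹ := by
    have (y : G) (h₁ : Commute x₁ y) (h₂ : Commute x₂ y) : Commute y (x₂ * x₁)⁻¹ :=
      (h₂.mul_left h₁).symm.inv_right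
    rw [commutatorElement_def]
    exact (((this _ h₁₁ h₂₁).mul_left (this _ h₁₂ h₂₂)).mul_left
      (this _ h₁₁.inv_right h₂₁.inv_right)).mul_left (this _ h₁₂.inv_right h₂₂.inv_right)
  calc ⁅x₁ * y₁, x₂ * y₂⁆ = (x₁ * y₁ * (x₂ * y₂)) * (x₂ * y₂ * (x₁ * y₁))⁻¹ := by
        rw [commutatorElement_def]; group
    _ = (x₁ * x₂) * (⁅y₁, y₂⁆ * (x₂ * x₁)⁻¹) := by
        rw [h₂₁.symm.mul_mul_mul_comm, h₁₂.symm.mul_mul_mul_comm, commutatorElement_def]; group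
    _ = ⁅x₁, x₂⁆ * ⁅y₁, y₂⁆ := by rw [hcomm.eq, commutatorElement_def x₁]; group

section Jordan

open Equiv Equiv.Perm

variable {α : Type*} [Fintype α] [DecidableEq α]

theorem mem_range_ofSubtype_finset_iff {s : Finset α} {u : Perm α} :
    u ∈ (ofSubtype : Perm {x // x ∈ s} →* Perm α).range ↔ u.support ⊆ s :=
  mem_range_ofSubtype_iff

theorem natCard_dvd_factorial_of_support_subset {H : Subgroup (Perm α)} {s : Finset α}
    (hH : ∀ h ∈ H, h.support ⊆ s) : Nat.card H ∣ s.card.factorial := by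
  have hle : H ≤ (ofSubtype : Perm {x // x ∈ s} →* Perm α).range := fun h hh =>
    mem_range_ofSubtype_finset_iff.2 (hH h hh)
  have hcard : Nat.card (ofSubtype : Perm {x // x ∈ s} →* Perm α).range = s.card.factorial := by
    rw [← Nat.card_congr (MonoidHom.ofInjective ofSubtype_injective).toEquiv, Nat.card_perm,
      Nat.card_eq_fintype_card, Fintype.card_coe]
  exact hcard ▸ Subgroup.card_dvd_of_le hle

theorem exists_mem_eqOn_compl_support_of_isPreprimitive {G : Subgroup (Perm α)}
    (hG : MulAction.IsPreprimitive G α) {g : Perm α} (hg : g ∈ G) (hgc : g.IsCycle)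
    (hp : g.support.card.Prime) (hcard : g.support.card < Fintype.card α) (τ : Perm α) :
    ∃ h ∈ G, ∀ x ∉ g.support, h x = τ x := by
  have hα : Nat.card α = Fintype.card α := Nat.card_eq_fintype_card
  have hp2 := hp.two_le
  obtain ⟨m, hm⟩ := Nat.exists_eq_add_of_lt hcard
  have hcompl : ((g.support : Set α)ᶜ).ncard = m + 1 := by
    have := Set.ncard_add_ncard_compl (g.support : Set α)
    rw [Set.ncard_coe_finset] at this
    omega
  have : MulAction.IsMultiplyPreprimitive G α (m + 2) := by
    refine hG.isMultiplyPreprimitive hcompl (by omega) ?_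
    have := isPretransitive_of_isCycle_mem hgc hg
    refine MulAction.IsPreprimitive.of_prime_card ?_
    convert! hp
    rw [Nat.card_eq_fintype_card, Fintype.card_subtype]
    congr 1
    ext x
    simp [SubMulAction.mem_ofFixingSubgroup_iff]
  have := this.isMultiplyPretransitive
  have : MulAction.IsMultiplyPretransitive G α (m + 1) :=
    MulAction.isMultiplyPretransitive_of_le (n := m + 2) (by omega) (by omega)
  let e : {x // x ∉ g.support} ≃ Fin (m + 1) := Fintype.equivFinOfCardEq <| by
    rw [← hcompl, ← Nat.card_eq_fintype_card]; rfl
  let ι : Fin (m + 1) ↪ α := e.symm.toEmbedding.trans (Function.Embedding.subtype _)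
  obtain ⟨h, hh⟩ := MulAction.exists_smul_eq G ι (ι.trans τ.toEmbedding)
  refine ⟨h, h.2, fun x hx => ?_⟩
  simpa [ι] using! DFunLike.congr_fun hh (e ⟨x, hx⟩)

-- A Frattini argument: an element of `G` agreeing with `τ` off the support of `g` conjugates `g`
-- into `F`, and Sylow's theorem in `G ⊓ F` conjugates the result back into the powers of `g`.
theorem exists_mul_mem_normalizing_of_disjoint {G : Subgroup (Perm α)}
    (hG : MulAction.IsPreprimitive G α) {g : Perm α} (hg : g ∈ G) (hgc : g.IsCycle)
    (hp : g.support.card.Prime) (hcard : g.support.card < Fintype.card α) {τ : Perm α}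
    (hτ : τ.Disjoint g) :
    ∃ ρ : Perm α, ρ.support ⊆ g.support ∧ ρ * τ ∈ G ∧ ρ * g * ρ⁻¹ ∈ Subgroup.zpowers g := by
  obtain ⟨h, hh, hhτ⟩ := exists_mem_eqOn_compl_support_of_isPreprimitive hG hg hgc hp hcard τ
  let F : Subgroup (Perm α) := (ofSubtype : Perm {x // x ∈ g.support} →* Perm α).range
  have mem_F {u : Perm α} : u ∈ F ↔ u.support ⊆ g.support := mem_range_ofSubtype_finset_iff
  have hρ : h * τ⁻¹ ∈ F := by
    refine mem_F.2 fun x hx => by_contra fun hxg => mem_support.1 hx ?_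
    have hτx : τ⁻¹ x ∉ g.support := by
      rw [notMem_support] at hxg ⊢
      rw [← mul_apply, ← hτ.commute.inv_left.eq, mul_apply, hxg]
    rw [mul_apply, hhτ _ hτx, ← mul_apply, mul_inv_cancel, one_apply]
  have hconj : h * g * h⁻¹ = (h * τ⁻¹) * g * (h * τ⁻¹)⁻¹ := by
    simp only [mul_inv_rev, inv_inv, mul_assoc, ← mul_assoc g τ, ← hτ.commute.eq,
      inv_mul_cancel_left]
  have hgF : g ∈ F := mem_F.2 subset_rfl
  have hsq : ¬ g.support.card ^ 2 ∣ Nat.card (G ⊓ F : Subgroup (Perm α)) := fun hdvd => by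
    have := hdvd.trans (natCard_dvd_factorial_of_support_subset fun u hu => mem_F.1 hu.2)
    rw [← Nat.mul_factorial_pred hp.ne_zero, sq] at this
    have := hp.dvd_factorial.1 (Nat.dvd_of_mul_dvd_mul_left hp.pos this)
    have := hp.pos
    omega
  obtain ⟨u, hu⟩ := exists_conj_mem_zpowers_of_orderOf_eq hp hsq
    (x := ⟨g, Subgroup.mem_inf.2 ⟨hg, hgF⟩⟩)
    (y := ⟨h * g * h⁻¹, Subgroup.mem_inf.2 ⟨mul_mem (mul_mem hh hg) (inv_mem hh),
      hconj ▸ mul_mem (mul_mem hρ hgF) (inv_mem hρ)⟩⟩)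
    (by rw [Subgroup.orderOf_mk, hgc.orderOf])
    (by rw [Subgroup.orderOf_mk, ← hgc.orderOf]; exact (MulAut.conj h).orderOf_eq g)
  refine ⟨u * (h * τ⁻¹), mem_F.1 (mul_mem u.2.2 hρ), ?_, ?_⟩
  · simpa [mul_assoc] using mul_mem u.2.1 hh
  · obtain ⟨j, hj⟩ := hu
    refine ⟨j, ?_⟩
    have := congrArg Subtype.val hj
    simp only [Subgroup.coe_zpow, Subgroup.coe_mul, Subgroup.coe_inv, hconj] at this
    change g ^ j = _
    rw [this]; group

theorem exists_eq_zpow_of_commute_of_support_subset {g c : Perm α} (hg : g.IsCycle)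
    (hc : Commute c g) (hsupp : c.support ⊆ g.support) : c ∈ Subgroup.zpowers g := by
  obtain ⟨hinv, hmem⟩ := hg.commute_iff.1 hc
  rwa [ofSubtype_subtypePerm] at hmem
  exact fun x hx => hsupp (mem_support.2 hx)

theorem isThreeCycle_commutatorElement_swap {x y z : α} (hxy : x ≠ y) (hxz : x ≠ z)
    (hyz : y ≠ z) : (⁅swap x y, swap y z⁆).IsThreeCycle := by
  have h : (swap x y * swap y z).IsThreeCycle := by
    rw [swap_comm x y]
    exact isThreeCycle_swap_mul_swap_same hxy.symm hyz hxz
  simpa [commutatorElement_def, mul_assoc] using h.isThreeCycle_sq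

theorem alternatingGroup_le_of_isPreprimitive_of_isCycle_mem {G : Subgroup (Perm α)}
    (hG : MulAction.IsPreprimitive G α) {g : Perm α} (hg : g ∈ G) (hgc : g.IsCycle)
    (hp : g.support.card.Prime) (hcard : g.support.card + 3 ≤ Fintype.card α) :
    alternatingGroup α ≤ G := by
  have hlt : g.support.card < Fintype.card α := by omega
  have hfix : 2 < g.supportᶜ.card := by rw [Finset.card_compl]; omega
  obtain ⟨x, y, z, hx, hy, hz, hxy, hxz, hyz⟩ := Finset.two_lt_card_iff.1 hfix
  simp only [Finset.mem_compl, notMem_support] at hx hy hz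
  have disjoint_swap {a b : α} (ha : g a = a) (hb : g b = b) : (swap a b).Disjoint g := by
    intro c
    by_cases h : c = a ∨ c = b
    · exact .inr (by rcases h with rfl | rfl <;> assumption)
    · exact .inl (swap_apply_of_ne_of_ne (by tauto) (by tauto))
  obtain ⟨ρ₁, hρ₁, hG₁, hn₁⟩ :=
    exists_mul_mem_normalizing_of_disjoint hG hg hgc hp hlt (disjoint_swap hx hy)
  obtain ⟨ρ₂, hρ₂, hG₂, hn₂⟩ :=
    exists_mul_mem_normalizing_of_disjoint hG hg hgc hp hlt (disjoint_swap hy hz)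
  have hzpow : ⁅ρ₁⁻¹, ρ₂⁻¹⁆ ∈ Subgroup.zpowers g := by
    refine exists_eq_zpow_of_commute_of_support_subset hgc
      (commute_commutatorElement_inv_of_conj_mem_zpowers hn₁ hn₂) ?_
    rw [← mem_range_ofSubtype_finset_iff] at hρ₁ hρ₂ ⊢
    exact Subgroup.commutator_le_self _
      (Subgroup.commutator_mem_commutator (inv_mem hρ₁) (inv_mem hρ₂))
  have commute_swap {ρ : Perm α} (hρ : ρ.support ⊆ g.support) {a b : α} (ha : g a = a)
      (hb : g b = b) : Commute ρ⁻¹ (swap a b) :=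
    ((disjoint_swap ha hb).symm.mono hρ subset_rfl).commute.inv_left
  have hsplit : ⁅(ρ₁ * swap x y)⁻¹, (ρ₂ * swap y z)⁻¹⁆ =
      ⁅ρ₁⁻¹, ρ₂⁻¹⁆ * ⁅swap x y, swap y z⁆ := by
    rw [mul_inv_rev, mul_inv_rev, swap_inv, swap_inv, ← (commute_swap hρ₁ hx hy).eq,
      ← (commute_swap hρ₂ hy hz).eq]
    exact commutatorElement_mul_mul_of_commute (commute_swap hρ₁ hx hy) (commute_swap hρ₁ hy hz)
      (commute_swap hρ₂ hx hy) (commute_swap hρ₂ hy hz)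
  refine alternatingGroup_le_of_isPreprimitive_of_isThreeCycle_mem hG
    (isThreeCycle_commutatorElement_swap hxy hxz hyz) ?_
  rw [← Subgroup.mul_mem_cancel_left G (Subgroup.zpowers_le.2 hg hzpow), ← hsplit]
  exact Subgroup.commutator_le_self _
    (Subgroup.commutator_mem_commutator (inv_mem hG₁) (inv_mem hG₂))

end Jordan

section InducedPerm

variable {Ω : Type*} [Field Ω]

theorem inv_apply_eq_of_forall_apply_eq {K : Type*} [Field K] [Algebra K Ω] {S : Set Ω}
    {σ : Ω ≃ₐ[K] Ω} {π : Equiv.Perm S} (h : ∀ y : S, σ y = π y) (y : S) : σ⁻¹ y = (π⁻¹ y : S) := by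
  rw [AlgEquiv.aut_inv, AlgEquiv.symm_apply_eq, h, ← Equiv.Perm.mul_apply, mul_inv_cancel,
    Equiv.Perm.one_apply]

/-- The permutations of a set `S` of elements of an extension `Ω` of `K` that are restrictions
of `K`-automorphisms of `Ω`. When `S` is the set of roots in `Ω` of a polynomial over `K`, this is
the Galois group of that polynomial viewed inside `Equiv.Perm S`; unlike
`Polynomial.Gal.galActionHom` it makes sense for several base fields `K` at once. -/
def inducedPerm (K : Type*) [Field K] [Algebra K Ω] (S : Set Ω) : Subgroup (Equiv.Perm S) where
  carrier := {π | ∃ σ : Ω ≃ₐ[K] Ω, ∀ y : S, σ y = π y}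
  one_mem' := ⟨1, fun _ => rfl⟩
  mul_mem' := by
    rintro π ρ ⟨σ, hσ⟩ ⟨τ, hτ⟩
    exact ⟨σ * τ, fun y => by rw [AlgEquiv.mul_apply, hτ, hσ, Equiv.Perm.mul_apply]⟩
  inv_mem' := by
    rintro π ⟨σ, hσ⟩
    exact ⟨σ⁻¹, inv_apply_eq_of_forall_apply_eq hσ⟩

variable {K L : Type*} [Field K] [Field L] [Algebra K Ω] [Algebra L Ω] {S : Set Ω}

theorem inducedPerm_le_inducedPerm [Algebra K L] [IsScalarTower K L Ω] :
    inducedPerm L S ≤ inducedPerm K S := by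
  rintro π ⟨σ, hσ⟩
  exact ⟨σ.restrictScalars K, hσ⟩

theorem commutator_inducedPerm_le
    (hcomm : ∀ (σ τ : Ω ≃ₐ[K] Ω) (x : L),
      σ (τ (algebraMap L Ω x)) = τ (σ (algebraMap L Ω x))) :
    ⁅inducedPerm K S, inducedPerm K S⁆ ≤ inducedPerm L S := by
  refine Subgroup.commutator_le.2 ?_
  intro π hπ ρ hρ
  obtain ⟨σ, hσ⟩ := hπ
  obtain ⟨τ, hτ⟩ := hρ
  have hfix (x : L) : (⁅σ, τ⁆ : Ω ≃ₐ[K] Ω) (algebraMap L Ω x) = algebraMap L Ω x := by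
    simp only [commutatorElement_def, AlgEquiv.mul_apply]
    rw [hcomm σ⁻¹ τ⁻¹]
    simp
  refine ⟨AlgEquiv.ofRingEquiv (f := (⁅σ, τ⁆ : Ω ≃ₐ[K] Ω).toRingEquiv) hfix, fun y => ?_⟩
  change σ (τ (σ⁻¹ (τ⁻¹ (y : Ω)))) = (π (ρ (π⁻¹ (ρ⁻¹ y))) : S)
  rw [inv_apply_eq_of_forall_apply_eq hτ, inv_apply_eq_of_forall_apply_eq hσ, hτ, hσ]

theorem alternatingGroup_le_inducedPerm_of_forall_comm [Fintype S] (hS : 5 ≤ Fintype.card S)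
    (hcomm : ∀ (σ τ : Ω ≃ₐ[K] Ω) (x : L),
      σ (τ (algebraMap L Ω x)) = τ (σ (algebraMap L Ω x)))
    (hK : alternatingGroup S ≤ inducedPerm K S) : alternatingGroup S ≤ inducedPerm L S := by
  rw [← commutator_alternatingGroup_eq_self (Nat.card_eq_fintype_card (α := S) ▸ hS)]
  exact (Subgroup.commutator_mono hK hK).trans (commutator_inducedPerm_le hcomm)

end InducedPerm

section GalActionHom

variable {K : Type*} [Field K] (f : K[X]) (E E' : Type*) [Field E] [Algebra K E] [Field E']
  [Algebra K E'] [Fact ((f.map (algebraMap K E)).Splits)] [Fact ((f.map (algebraMap K E')).Splits)]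

theorem inducedPerm_le_range_galActionHom :
    inducedPerm K (f.rootSet E) ≤ (Gal.galActionHom f E).range := by
  rintro π ⟨σ, hσ⟩
  refine ⟨Gal.restrict f E σ, Equiv.ext fun y => Subtype.ext ?_⟩
  rw [Gal.galActionHom_restrict, hσ]

theorem range_galActionHom_eq_inducedPerm [Normal K E] :
    (Gal.galActionHom f E).range = inducedPerm K (f.rootSet E) := by
  refine le_antisymm ?_ (inducedPerm_le_range_galActionHom f E)
  rintro _ ⟨g, rfl⟩
  obtain ⟨σ, rfl⟩ := Gal.restrict_surjective f E g
  exact ⟨σ, fun y => (Gal.galActionHom_restrict f E σ y).symm⟩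

theorem exists_range_galActionHom_eq_map : ∃ e : f.rootSet E ≃ f.rootSet E',
    (Gal.galActionHom f E').range =
      (Gal.galActionHom f E).range.map e.permCongrHom.toMonoidHom := by
  refine ⟨(Gal.rootsEquivRoots f E).symm.trans (Gal.rootsEquivRoots f E'), ?_⟩
  rw [← MonoidHom.range_comp]
  congr 1
  ext g y
  simp [Gal.galActionHom, Gal.smul_def]

variable {f E E'}

theorem alternatingGroup_le_range_galActionHom_of_le
    (hE : alternatingGroup (f.rootSet E) ≤ (Gal.galActionHom f E).range) :
    alternatingGroup (f.rootSet E') ≤ (Gal.galActionHom f E').range := by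
  obtain ⟨e, he⟩ := exists_range_galActionHom_eq_map f E E'
  intro π hπ
  rw [he, Subgroup.mem_map_equiv]
  refine hE ?_
  rw [Equiv.Perm.mem_alternatingGroup] at hπ ⊢
  exact (Equiv.Perm.sign_permCongr e.symm π).trans hπ

theorem isPreprimitive_range_galActionHom_of_isPreprimitive
    (hE : MulAction.IsPreprimitive (Gal.galActionHom f E).range (f.rootSet E)) :
    MulAction.IsPreprimitive (Gal.galActionHom f E').range (f.rootSet E') := by
  obtain ⟨e, he⟩ := exists_range_galActionHom_eq_map f E E'
  rw [he]
  let φ : (Gal.galActionHom f E).range →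
      (Gal.galActionHom f E).range.map e.permCongrHom.toMonoidHom :=
    fun g => ⟨e.permCongrHom g, Subgroup.mem_map_of_mem _ g.2⟩
  let F : f.rootSet E →ₑ[φ] f.rootSet E' := ⟨e, fun g x => by
    change e (g.1 x) = e.permCongr g.1 (e x)
    simp⟩
  exact MulAction.IsPreprimitive.of_surjective (f := F) e.surjective

end GalActionHom

section Discriminant

theorem sq_det_vandermonde {R : Type*} [CommRing R] {n : ℕ} (v : Fin n → R) :
    (Matrix.vandermonde v).det ^ 2 =
        ∏ i, (derivative (Lagrange.nodal Finset.univ v)).eval (v i) ∨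
      (Matrix.vandermonde v).det ^ 2 =
        -∏ i, (derivative (Lagrange.nodal Finset.univ v)).eval (v i) := by
  have hsign : ∏ i : Fin n, ∏ j ∈ Finset.Ioi i, (v i - v j) * (v j - v i) =
      (∏ i : Fin n, ∏ _j ∈ Finset.Ioi i, (-1 : R)) * (Matrix.vandermonde v).det ^ 2 := by
    simp only [Matrix.det_vandermonde, ← Finset.prod_pow, ← Finset.prod_mul_distrib]
    exact Finset.prod_congr rfl fun i _ => Finset.prod_congr rfl fun j _ => by ring
  have hderiv (i : Fin n) : (derivative (Lagrange.nodal Finset.univ v)).eval (v i) =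
      ∏ j ∈ ({i}ᶜ : Finset (Fin n)), (v i - v j) := by
    rw [Lagrange.eval_nodal_derivative_eval_node_eq (Finset.mem_univ i), Lagrange.eval_nodal,
      Finset.compl_singleton]
  simp only [hderiv, ← Finset.prod_prod_Ioi_mul_eq_prod_prod_off_diag (fun j i => v i - v j),
    hsign, Finset.prod_const, Finset.prod_pow_eq_pow_sum]
  rcases neg_one_pow_eq_or R (∑ i : Fin n, (Finset.Ioi i).card) with h | h
  · left; rw [h, one_mul]
  · right; rw [h, neg_one_mul, neg_neg]

variable {K Ω : Type*} [Field K] [Field Ω] [Algebra K Ω]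

theorem inducedPerm_le_alternatingGroup_of_det_vandermonde_mem [NeZero (2 : Ω)] {S : Set Ω}
    [Fintype S] {n : ℕ} (e : Fin n ≃ S)
    (hdet : (Matrix.vandermonde fun i => (e i : Ω)).det ∈ (algebraMap K Ω).range) :
    inducedPerm K S ≤ alternatingGroup S := by
  rintro π ⟨σ, hσ⟩
  set v : Fin n → Ω := fun i => e i
  have hv : (Matrix.vandermonde v).det ≠ 0 :=
    Matrix.det_vandermonde_ne_zero_iff.2 (Subtype.val_injective.comp e.injective)
  have hfix : σ (Matrix.vandermonde v).det = (Matrix.vandermonde v).det := by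
    obtain ⟨d, hd⟩ := hdet
    rw [← hd, AlgEquiv.commutes]
  have hperm : σ (Matrix.vandermonde v).det =
      Equiv.Perm.sign (e.symm.permCongr π) * (Matrix.vandermonde v).det := by
    rw [← Matrix.det_permute]
    refine (RingHom.map_det (σ : Ω →+* Ω) _).trans (congrArg _ (Matrix.ext fun i j => ?_))
    simp [Matrix.vandermonde_apply, v, hσ]
  rw [Equiv.Perm.mem_alternatingGroup, ← Equiv.Perm.sign_permCongr e.symm π]
  refine (Int.units_eq_one_or _).resolve_right fun hneg => ?_
  rw [hfix, hneg, Units.val_neg, Units.val_one, Int.cast_neg, Int.cast_one, neg_one_mul] at hperm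
  exact mul_ne_zero two_ne_zero hv (by linear_combination hperm)

theorem nodal_eq_map_of_splits {ι : Type*} [Fintype ι] {f : K[X]} (hf : f.Monic)
    (hsep : f.Separable) (hs : (f.map (algebraMap K Ω)).Splits) (e : ι ≃ f.rootSet Ω) :
    Lagrange.nodal Finset.univ (fun i => (e i : Ω)) = f.map (algebraMap K Ω) := by
  rw [Lagrange.nodal, e.prod_comp fun y => X - C (y : Ω), hs.eq_prod_roots_of_monic (hf.map _),
    ← Finset.prod_subtype (f.map (algebraMap K Ω)).roots.toFinset
      (fun y => by simp [rootSet_def, aroots_def]) (fun y => X - C y),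
    Finset.prod, Multiset.toFinset_val, Multiset.dedup_eq_self.2 (nodup_roots hsep.map)]

theorem inducedPerm_rootSet_le_alternatingGroup [NeZero (2 : Ω)] {f : K[X]} (hf : f.Monic)
    (hsep : f.Separable) (hs : (f.map (algebraMap K Ω)).Splits) {d : K}
    (hd : ∏ y : f.rootSet Ω, aeval (y : Ω) (derivative f) = algebraMap K Ω d)
    (hsq : IsSquare d) (hsq' : IsSquare (-d)) :
    inducedPerm K (f.rootSet Ω) ≤ alternatingGroup (f.rootSet Ω) := by
  let e := (Fintype.equivFin (f.rootSet Ω)).symm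
  have hprod : ∏ i, (derivative (Lagrange.nodal Finset.univ fun i => (e i : Ω))).eval (e i : Ω) =
      algebraMap K Ω d := by
    simp only [nodal_eq_map_of_splits hf hsep hs, derivative_map, eval_map_algebraMap]
    rw [← hd, e.prod_comp fun y => aeval (y : Ω) (derivative f)]
  have hmem {c : K} (hc : IsSquare c) {x : Ω} (hx : x ^ 2 = algebraMap K Ω c) :
      x ∈ (algebraMap K Ω).range := by
    obtain ⟨b, rfl⟩ := hc
    rw [map_mul, ← sq, sq_eq_sq_iff_eq_or_eq_neg] at hx
    rcases hx with rfl | rfl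
    · exact ⟨b, rfl⟩
    · exact ⟨-b, map_neg _ b⟩
  refine inducedPerm_le_alternatingGroup_of_det_vandermonde_mem e ?_
  rcases sq_det_vandermonde fun i => (e i : Ω) with h | h
  · exact hmem hsq (h.trans hprod)
  · exact hmem hsq' (by rw [h, hprod, map_neg])

end Discriminant

section Trinomial

/-- The trinomial `Y ^ (p + t) - T * Y ^ t + 1` in the variable `Y`, which Abhyankar used in
characteristic `p` to realise alternating groups as Galois groups of unramified coverings of the
affine line. -/
noncomputable def abhyankarTrinomial {R : Type*} [CommRing R] (p t : ℕ) (T : R) : R[X] :=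
  X ^ (p + t) - C T * X ^ t + 1

theorem abhyankarTrinomial_map {R S : Type*} [CommRing R] [CommRing S] (φ : R →+* S) (p t : ℕ)
    (T : R) : (abhyankarTrinomial p t T).map φ = abhyankarTrinomial p t (φ T) := by
  simp [abhyankarTrinomial]

theorem rootSet_abhyankarTrinomial_algebraMap {K L : Type*} [Field K] [Field L] [Algebra K L]
    (p t : ℕ) (T : K) (Ω : Type*) [Field Ω] [Algebra K Ω] [Algebra L Ω] [IsScalarTower K L Ω] :
    (abhyankarTrinomial p t (algebraMap K L T)).rootSet Ω =
      (abhyankarTrinomial p t T).rootSet Ω := by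
  rw [← abhyankarTrinomial_map, rootSet_def, rootSet_def, aroots_map]

theorem abhyankarTrinomial_monic {R : Type*} [CommRing R] {p t : ℕ} (hp : p ≠ 0)
    (T : R) : (abhyankarTrinomial p t T).Monic := by
  nontriviality R
  unfold abhyankarTrinomial
  monicity!
  simp [hp]

theorem natDegree_abhyankarTrinomial {R : Type*} [CommRing R] [Nontrivial R] {p t : ℕ}
    (hp : p ≠ 0) (T : R) : (abhyankarTrinomial p t T).natDegree = p + t := by
  unfold abhyankarTrinomial
  compute_degree!
  simp [hp]

-- Since `p + t = t` in characteristic `p`.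
theorem X_mul_derivative_abhyankarTrinomial {R : Type*} [CommRing R] {p t : ℕ} [CharP R p]
    (ht : t ≠ 0) (T : R) : X * derivative (abhyankarTrinomial p t T) =
      C (t : R) * (abhyankarTrinomial p t T - 1) := by
  obtain ⟨m, rfl⟩ := Nat.exists_eq_succ_of_ne_zero ht
  simp [abhyankarTrinomial, derivative_X_pow]
  ring

variable {K Ω : Type*} [Field K] [Field Ω] [Algebra K Ω] {p t : ℕ} {T : K}

theorem abhyankarTrinomial_separable [CharP K p] (ht : (t : K) ≠ 0) :
    (abhyankarTrinomial p t T).Separable := by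
  have ht₀ : t ≠ 0 := fun h => ht (by simp [h])
  refine ⟨1, -(C (t : K)⁻¹ * X), ?_⟩
  have hC : C (t : K)⁻¹ * C (t : K) = 1 := by rw [← C_mul, inv_mul_cancel₀ ht, C_1]
  linear_combination -C (t : K)⁻¹ * X_mul_derivative_abhyankarTrinomial (p := p) ht₀ T -
    (abhyankarTrinomial p t T - 1) * hC

theorem prod_aeval_derivative_abhyankarTrinomial [CharP K p] (hp : p ≠ 0) (ht : (t : K) ≠ 0)
    (hs : ((abhyankarTrinomial p t T).map (algebraMap K Ω)).Splits) :
    ∏ y : (abhyankarTrinomial p t T).rootSet Ω,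
      aeval (y : Ω) (derivative (abhyankarTrinomial p t T)) = algebraMap K Ω (t ^ (p + t)) := by
  have ht₀ : t ≠ 0 := fun h => ht (by simp [h])
  have hmonic : (abhyankarTrinomial p t T).Monic := abhyankarTrinomial_monic hp T
  have hsep : (abhyankarTrinomial p t T).Separable := abhyankarTrinomial_separable ht
  have hroot (y : (abhyankarTrinomial p t T).rootSet Ω) :
      (0 - (y : Ω)) * aeval (y : Ω) (derivative (abhyankarTrinomial p t T)) = t := by
    have := congrArg (aeval (y : Ω)) (X_mul_derivative_abhyankarTrinomial (p := p) ht₀ T)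
    simp only [map_mul, map_sub, aeval_X, (mem_rootSet.1 y.2).2, map_one,
      map_natCast] at this
    linear_combination -this
  have hconst : ∏ y : (abhyankarTrinomial p t T).rootSet Ω, (0 - (y : Ω)) = 1 := by
    have hnodal := congrArg (eval 0) (nodal_eq_map_of_splits hmonic hsep hs (Equiv.refl _))
    simp only [Equiv.refl_apply] at hnodal
    rw [Lagrange.eval_nodal, abhyankarTrinomial_map] at hnodal
    simpa [abhyankarTrinomial, hp, ht₀] using hnodal
  calc ∏ y : (abhyankarTrinomial p t T).rootSet Ω,
        aeval (y : Ω) (derivative (abhyankarTrinomial p t T))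
      = ∏ _y : (abhyankarTrinomial p t T).rootSet Ω, (t : Ω) := by
        rw [← one_mul (∏ y, _), ← hconst, ← Finset.prod_mul_distrib]
        exact Finset.prod_congr rfl fun y _ => hroot y
    _ = algebraMap K Ω (t ^ (p + t)) := by
        rw [Finset.prod_const, Finset.card_univ, card_rootSet_eq_natDegree hsep hs,
          natDegree_abhyankarTrinomial hp, map_pow, map_natCast]

theorem inducedPerm_rootSet_abhyankarTrinomial_le_alternatingGroup (k : Type*) [Field k]
    [IsSepClosed k] [NeZero (2 : k)] [Algebra k K] [CharP k p] (hp : p ≠ 0) (ht : (t : K) ≠ 0)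
    (hs : ((abhyankarTrinomial p t T).map (algebraMap K Ω)).Splits) :
    inducedPerm K ((abhyankarTrinomial p t T).rootSet Ω) ≤ alternatingGroup _ := by
  have : CharP K p := charP_of_injective_algebraMap (algebraMap k K).injective p
  have : NeZero (2 : Ω) := by
    have h := NeZero.of_injective (a := (2 : k)) ((algebraMap K Ω).comp (algebraMap k K)).injective
    rwa [map_ofNat] at h
  have hsq (c : k) : IsSquare (algebraMap k K c) := by
    obtain ⟨z, hz⟩ := IsSepClosed.exists_pow_nat_eq c 2
    exact ⟨algebraMap k K z, by rw [← hz, map_pow, sq]⟩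
  refine inducedPerm_rootSet_le_alternatingGroup (abhyankarTrinomial_monic hp T)
    (abhyankarTrinomial_separable ht) hs (prod_aeval_derivative_abhyankarTrinomial hp ht hs) ?_ ?_
  · simpa using hsq (t ^ (p + t))
  · simpa using hsq (-(t ^ (p + t)))

end Trinomial

section ExtendByNormality

theorem algHom_ext_of_adjoin_eq_top {k K E : Type*} [Field k] [Field K] [Field E] [Algebra k K]
    [Algebra k E] {T : K} (hT : IntermediateField.adjoin k {T} = ⊤) {φ φ' : K →ₐ[k] E}
    (h : φ T = φ' T) : φ = φ' := by
  have hval : φ.comp (⊤ : IntermediateField k K).val = φ'.comp (⊤ : IntermediateField k K).val :=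
    IntermediateField.algHom_ext_of_eq_adjoin k hT.symm (by rintro _ rfl; exact h)
  exact AlgHom.ext fun x => DFunLike.congr_fun hval ⟨x, IntermediateField.mem_top⟩

variable {k K N E : Type*} [Field k] [Field K] [Field N] [Field E] [Algebra k K] [Algebra k N]
  [Algebra k E] [Algebra K E] [IsScalarTower k K E] {T : K}

theorem exists_algHom_comp_eq_of_adjoin_eq_top (hT : IntermediateField.adjoin k {T} = ⊤)
    {ψ : N →ₐ[k] E} {τ : N} (hψ : ψ τ = algebraMap K E T) :
    ∃ i : K →ₐ[k] N, i T = τ ∧ ψ.comp i = IsScalarTower.toAlgHom k K E := by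
  have hrange (x : K) : IsScalarTower.toAlgHom k K E x ∈ ψ.range := by
    have hle : (⊤ : IntermediateField k K) ≤ ψ.fieldRange.comap (IsScalarTower.toAlgHom k K E) := by
      rw [← hT, IntermediateField.adjoin_simple_le_iff]
      exact ⟨τ, hψ⟩
    exact hle IntermediateField.mem_top
  let i : K →ₐ[k] N := (AlgEquiv.ofInjectiveField ψ).symm.toAlgHom.comp
    ((IsScalarTower.toAlgHom k K E).codRestrict ψ.range hrange)
  have hi : ψ.comp i = IsScalarTower.toAlgHom k K E :=
    AlgHom.ext fun x =>
      congrArg Subtype.val ((AlgEquiv.ofInjectiveField ψ).apply_symm_apply ⟨_, hrange x⟩)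
  exact ⟨i, ψ.injective ((DFunLike.congr_fun hi T).trans hψ.symm), hi⟩

theorem exists_algEquiv_apply_eq_of_adjoin_eq_top [Normal K E]
    (hT : IntermediateField.adjoin k {T} = ⊤) {ψ ψ' : N →ₐ[k] E} {τ : N}
    (hψ : ψ τ = algebraMap K E T) (hψ' : ψ' τ = algebraMap K E T) :
    ∃ σ : E ≃ₐ[K] E, ∀ x, σ (ψ x) = ψ' x := by
  obtain ⟨i, hiT, hi⟩ := exists_algHom_comp_eq_of_adjoin_eq_top hT hψ
  have hi' : ψ'.comp i = IsScalarTower.toAlgHom k K E :=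
    algHom_ext_of_adjoin_eq_top hT (by rw [AlgHom.comp_apply, hiT]; exact hψ')
  let _ : Algebra K N := i.toRingHom.toAlgebra
  let Ψ : N →ₐ[K] E := { ψ with commutes' := DFunLike.congr_fun hi }
  let Ψ' : N →ₐ[K] E := { ψ' with commutes' := DFunLike.congr_fun hi' }
  let _ : Algebra N E := Ψ.toRingHom.toAlgebra
  have : IsScalarTower K N E := IsScalarTower.of_algebraMap_eq fun x => (Ψ.commutes x).symm
  exact ⟨AlgEquiv.ofBijective (AlgHom.liftNormal Ψ' E) (AlgHom.normal_bijective _ E E _),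
    AlgHom.liftNormal_commutes Ψ' E⟩

end ExtendByNormality

section DoubleTransitivity

variable {k : Type*} [Field k]

theorem irreducible_X_pow_sub_C_algebraMap_of_eval_derivative_ne_zero {c : k[X]} {ζ : k}
    (hc : c.IsRoot ζ) (hc' : (derivative c).eval ζ ≠ 0) {n : ℕ} (hn : n ≠ 0) :
    Irreducible (X ^ n - C (algebraMap k[X] (RatFunc k) c)) := by
  have hmonic : (X ^ n - C c : k[X][X]).Monic := monic_X_pow_sub_C c hn
  have hprime : (Ideal.span {X - C ζ}).IsPrime :=
    (Ideal.span_singleton_prime (X_sub_C_ne_zero ζ)).2 (prime_X_sub_C ζ)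
  have hmem : c ∈ Ideal.span {X - C ζ} := Ideal.mem_span_singleton.2 (dvd_iff_isRoot.2 hc)
  have heis : (X ^ n - C c : k[X][X]).IsEisensteinAt (Ideal.span {X - C ζ}) := by
    refine hmonic.isEisensteinAt_of_mem_of_notMem hprime.ne_top (fun {i} hi => ?_) fun h => hc' ?_
    · rw [natDegree_X_pow_sub_C] at hi
      rw [coeff_sub, coeff_X_pow, if_neg hi.ne, zero_sub, coeff_C]
      split_ifs
      · exact neg_mem hmem
      · exact neg_mem (zero_mem _)
    · rw [coeff_sub, coeff_X_pow, if_neg hn.symm, coeff_C_zero, zero_sub, neg_mem_iff,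
        Ideal.span_singleton_pow, Ideal.mem_span_singleton] at h
      obtain ⟨q, rfl⟩ := h
      simp [derivative_mul, derivative_pow]
  have hirr := heis.irreducible hprime hmonic.isPrimitive
    (by rw [natDegree_X_pow_sub_C]; exact Nat.pos_of_ne_zero hn)
  simpa using (hmonic.irreducible_iff_irreducible_map_fraction_map (K := RatFunc k)).1 hirr

theorem exists_algHom_adjoinRoot_apply_eq {E : Type*} [Field E] [Algebra k E] {g : k[X][X]}
    {u v : E} (hu : Transcendental k u) (hv : g.eval₂ (aeval u : k[X] →ₐ[k] E) v = 0) :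
    ∃ φ : AdjoinRoot (g.map (algebraMap k[X] (RatFunc k))) →ₐ[k] E,
      φ (AdjoinRoot.of _ RatFunc.X) = u ∧ φ (AdjoinRoot.root _) = v := by
  let i : RatFunc k →ₐ[k] E :=
    (IntermediateField.val _).comp (RatFunc.algEquivOfTranscendental u hu).toAlgHom
  have hi : i.comp (IsScalarTower.toAlgHom k k[X] (RatFunc k)) = aeval u := by
    ext
    simp [i]
  have hroot : (g.map (algebraMap k[X] (RatFunc k))).eval₂ (i : RatFunc k →+* E) v = 0 := by
    rw [eval₂_map, ← hv, ← hi]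
    rfl
  refine ⟨AdjoinRoot.liftAlgHom _ i v hroot, ?_, ?_⟩
  · simp [i]
  · simp

section Relation

variable {E : Type*} [Field E] {p t : ℕ} {T y z : E}

theorem isRoot_abhyankarTrinomial_iff :
    (abhyankarTrinomial p t T).IsRoot y ↔ y ^ (p + t) - T * y ^ t + 1 = 0 := by
  simp [abhyankarTrinomial]

theorem ne_zero_of_isRoot_abhyankarTrinomial (ht : t ≠ 0)
    (hy : (abhyankarTrinomial p t T).IsRoot y) : y ≠ 0 := by
  rintro rfl
  rw [isRoot_abhyankarTrinomial_iff] at hy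
  simp [ht] at hy

theorem eq_div_of_isRoot_abhyankarTrinomial (ht : t ≠ 0)
    (hy : (abhyankarTrinomial p t T).IsRoot y) : T = (y ^ (p + t) + 1) / y ^ t := by
  rw [eq_div_iff (pow_ne_zero t (ne_zero_of_isRoot_abhyankarTrinomial ht hy))]
  linear_combination -isRoot_abhyankarTrinomial_iff.1 hy

-- Eliminating `T` between the equations of `y` and `z` leaves an equation between `z / y` and `y`.
theorem div_pow_mul_pow_eq_of_isRoot_abhyankarTrinomial (ht : t ≠ 0)
    (hy : (abhyankarTrinomial p t T).IsRoot y) (hz : (abhyankarTrinomial p t T).IsRoot z) :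
    ((z / y) ^ t * ((z / y) ^ p - 1)) * y ^ (p + t) = (z / y) ^ t - 1 := by
  have hy₀ := ne_zero_of_isRoot_abhyankarTrinomial ht hy
  rw [isRoot_abhyankarTrinomial_iff] at hy hz
  have helim : y ^ t * (z ^ t * (z ^ p - y ^ p)) = z ^ t - y ^ t := by
    linear_combination y ^ t * hz - z ^ t * hy
  rw [div_pow, div_pow, pow_add, div_sub_one (pow_ne_zero p hy₀), ← mul_div_mul_comm]
  field_simp [pow_ne_zero t hy₀, pow_ne_zero p hy₀]
  linear_combination helim

variable [Fact p.Prime] [CharP E p]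

theorem pow_mul_pow_sub_one_ne_zero_of_char {x : E} (hx : x ≠ 0) (hx' : x ≠ 1) :
    x ^ t * (x ^ p - 1) ≠ 0 := by
  rw [show x ^ p - 1 = (x - 1) ^ p by rw [sub_pow_char, one_pow]]
  exact mul_ne_zero (pow_ne_zero t hx) (pow_ne_zero p (sub_ne_zero.2 hx'))

theorem transcendental_div_of_isRoot_abhyankarTrinomial [Algebra k E] (ht : t ≠ 0)
    (hT : Transcendental k T) (hy : (abhyankarTrinomial p t T).IsRoot y)
    (hz : (abhyankarTrinomial p t T).IsRoot z) (hyz : y ≠ z) : Transcendental k (z / y) := by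
  intro hu
  have hy₀ := ne_zero_of_isRoot_abhyankarTrinomial ht hy
  have hz₀ := ne_zero_of_isRoot_abhyankarTrinomial ht hz
  have hD : (z / y) ^ t * ((z / y) ^ p - 1) ≠ 0 :=
    pow_mul_pow_sub_one_ne_zero_of_char (div_ne_zero hz₀ hy₀)
      fun h => hyz ((div_eq_one_iff_eq hy₀).1 h).symm
  have hone : IsAlgebraic k (1 : E) := isAlgebraic_one
  have hyn : IsAlgebraic k (y ^ (p + t)) := by
    rw [eq_div_of_mul_eq hD
      ((mul_comm _ _).trans (div_pow_mul_pow_eq_of_isRoot_abhyankarTrinomial ht hy hz)),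
      div_eq_mul_inv]
    exact ((hu.pow t).sub hone).mul ((hu.pow t).mul ((hu.pow p).sub hone)).inv
  have hy_alg : IsAlgebraic k y := hyn.of_pow (by lia)
  rw [eq_div_of_isRoot_abhyankarTrinomial ht hy, div_eq_mul_inv] at hT
  exact hT ((hyn.add hone).mul (hy_alg.pow t).inv)

end Relation

variable {p t : ℕ}

/-- For distinct roots `y` and `z` of `Y ^ (p + t) - T * Y ^ t + 1`, the ratio `u = z / y` and the
multiple `v = u ^ t * (u ^ p - 1) * y` of `y` generate the same field as `y` and `z` do. This is the
equation of `v` over `k(u)`; the inner variable stands for `u` and the outer one for `v`. -/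
noncomputable def rootPairPolynomial (k : Type*) [Field k] (p t : ℕ) : k[X][X] :=
  X ^ (p + t) - C ((X ^ t - 1) * (X ^ t * (X ^ p - 1)) ^ (p + t - 1))

theorem irreducible_map_rootPairPolynomial [Fact p.Prime] [CharP k p] {ζ : k}
    (hζ : IsPrimitiveRoot ζ t) (ht : 1 < t) :
    Irreducible ((rootPairPolynomial k p t).map (algebraMap k[X] (RatFunc k))) := by
  have ht₀ : t ≠ 0 := by lia
  have : NeZero t := ⟨ht₀⟩
  have hD : ζ ^ t * (ζ ^ p - 1) ≠ 0 :=
    pow_mul_pow_sub_one_ne_zero_of_char (hζ.ne_zero ht₀) (hζ.ne_one ht)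
  simp only [rootPairPolynomial, Polynomial.map_sub, Polynomial.map_pow, map_X, map_C]
  refine irreducible_X_pow_sub_C_algebraMap_of_eval_derivative_ne_zero (ζ := ζ) ?_ ?_ (by lia)
  · simp [hζ.pow_eq_one]
  · have hderiv : (derivative ((X ^ t - 1 : k[X]) * (X ^ t * (X ^ p - 1)) ^ (p + t - 1))).eval ζ =
        t * ζ ^ (t - 1) * (ζ ^ t * (ζ ^ p - 1)) ^ (p + t - 1) := by
      simp [derivative_mul, derivative_X_pow, hζ.pow_eq_one]
    rw [hderiv]
    exact mul_ne_zero (mul_ne_zero hζ.neZero'.out (pow_ne_zero _ (hζ.ne_zero ht₀)))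
      (pow_ne_zero _ hD)

theorem exists_algHom_apply_eq_of_isRoot_abhyankarTrinomial [Fact p.Prime] [CharP k p]
    [Fact (Irreducible ((rootPairPolynomial k p t).map (algebraMap k[X] (RatFunc k))))]
    {E : Type*} [Field E] [Algebra k E] {T y z : E} (ht : t ≠ 0) (hT : Transcendental k T)
    (hy : (abhyankarTrinomial p t T).IsRoot y) (hz : (abhyankarTrinomial p t T).IsRoot z)
    (hyz : y ≠ z) :
    ∃ φ : AdjoinRoot ((rootPairPolynomial k p t).map (algebraMap k[X] (RatFunc k))) →ₐ[k] E,
      φ (AdjoinRoot.of _ RatFunc.X) = z / y ∧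
        φ (AdjoinRoot.root _ / (AdjoinRoot.of _ RatFunc.X ^ t *
          (AdjoinRoot.of _ RatFunc.X ^ p - 1))) = y := by
  have : CharP E p := charP_of_injective_algebraMap (algebraMap k E).injective p
  have hy₀ := ne_zero_of_isRoot_abhyankarTrinomial ht hy
  have hD : (z / y) ^ t * ((z / y) ^ p - 1) ≠ 0 :=
    pow_mul_pow_sub_one_ne_zero_of_char
      (div_ne_zero (ne_zero_of_isRoot_abhyankarTrinomial ht hz) hy₀)
      fun h => hyz ((div_eq_one_iff_eq hy₀).1 h).symm
  have hroot : (rootPairPolynomial k p t).eval₂ (aeval (z / y) : k[X] →ₐ[k] E)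
      ((z / y) ^ t * ((z / y) ^ p - 1) * y) = 0 := by
    obtain ⟨m, hm⟩ : ∃ m, p + t = m + 1 := Nat.exists_eq_succ_of_ne_zero (by lia)
    rw [rootPairPolynomial, eval₂_sub, eval₂_X_pow, eval₂_C]
    simp only [RingHom.coe_coe, map_mul, map_sub, map_pow, map_one, aeval_X,
      ← div_pow_mul_pow_eq_of_isRoot_abhyankarTrinomial ht hy hz, hm, Nat.add_sub_cancel]
    generalize (z / y) ^ t * ((z / y) ^ p - 1) = D
    ring
  obtain ⟨φ, hu, hv⟩ := exists_algHom_adjoinRoot_apply_eq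
    (transcendental_div_of_isRoot_abhyankarTrinomial ht hT hy hz hyz) hroot
  refine ⟨φ, hu, ?_⟩
  simp only [map_div₀, map_mul, map_pow, map_sub, map_one, hu, hv]
  exact mul_div_cancel_left₀ y hD

theorem exists_algEquiv_apply_eq_of_isRoot_abhyankarTrinomial [Fact p.Prime] [CharP k p]
    {K E : Type*} [Field K] [Field E] [Algebra k K] [Algebra k E] [Algebra K E]
    [IsScalarTower k K E] [Normal K E] {ζ : k} (hζ : IsPrimitiveRoot ζ t) (ht : 1 < t)
    {T : K} (hT : Transcendental k T) (hK : IntermediateField.adjoin k {T} = ⊤) {y z y' z' : E}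
    (hy : (abhyankarTrinomial p t (algebraMap K E T)).IsRoot y)
    (hz : (abhyankarTrinomial p t (algebraMap K E T)).IsRoot z) (hyz : y ≠ z)
    (hy' : (abhyankarTrinomial p t (algebraMap K E T)).IsRoot y')
    (hz' : (abhyankarTrinomial p t (algebraMap K E T)).IsRoot z') (hyz' : y' ≠ z') :
    ∃ σ : E ≃ₐ[K] E, σ y = y' ∧ σ z = z' := by
  have ht₀ : t ≠ 0 := by lia
  have : Fact (Irreducible ((rootPairPolynomial k p t).map (algebraMap k[X] (RatFunc k)))) :=
    ⟨irreducible_map_rootPairPolynomial hζ ht⟩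
  let N := AdjoinRoot ((rootPairPolynomial k p t).map (algebraMap k[X] (RatFunc k)))
  let u : N := AdjoinRoot.of _ RatFunc.X
  let w : N := AdjoinRoot.root _ / (u ^ t * (u ^ p - 1))
  have hembed {y z : E} (hy : (abhyankarTrinomial p t (algebraMap K E T)).IsRoot y)
      (hz : (abhyankarTrinomial p t (algebraMap K E T)).IsRoot z) (hyz : y ≠ z) :
      ∃ φ : N →ₐ[k] E, φ w = y ∧ φ (u * w) = z ∧
        φ ((w ^ (p + t) + 1) / w ^ t) = algebraMap K E T := by
    obtain ⟨φ, hu, hw⟩ := exists_algHom_apply_eq_of_isRoot_abhyankarTrinomial (k := k) ht₀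
      ((transcendental_algebraMap_iff (algebraMap K E).injective).2 hT) hy hz hyz
    change φ u = _ at hu
    change φ w = _ at hw
    refine ⟨φ, hw, ?_, ?_⟩
    · rw [map_mul, hu, hw, div_mul_cancel₀ z (ne_zero_of_isRoot_abhyankarTrinomial ht₀ hy)]
    · simp only [map_div₀, map_add, map_pow, map_one, hw,
        eq_div_of_isRoot_abhyankarTrinomial ht₀ hy]
  obtain ⟨φ, hφy, hφz, hφT⟩ := hembed hy hz hyz
  obtain ⟨φ', hφy', hφz', hφT'⟩ := hembed hy' hz' hyz'
  obtain ⟨σ, hσ⟩ := exists_algEquiv_apply_eq_of_adjoin_eq_top hK hφT hφT'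
  exact ⟨σ, by rw [← hφy, hσ, hφy'], by rw [← hφz, hσ, hφz']⟩

theorem isPreprimitive_inducedPerm_rootSet_abhyankarTrinomial [Fact p.Prime] [CharP k p]
    {K E : Type*} [Field K] [Field E] [Algebra k K] [Algebra k E] [Algebra K E]
    [IsScalarTower k K E] [Normal K E] {ζ : k} (hζ : IsPrimitiveRoot ζ t) (ht : 1 < t)
    {T : K} (hT : Transcendental k T) (hK : IntermediateField.adjoin k {T} = ⊤) :
    MulAction.IsPreprimitive (inducedPerm K ((abhyankarTrinomial p t T).rootSet E))
      ((abhyankarTrinomial p t T).rootSet E) := by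
  have hroot (y : (abhyankarTrinomial p t T).rootSet E) :
      (abhyankarTrinomial p t (algebraMap K E T)).IsRoot (y : E) := by
    rw [← abhyankarTrinomial_map, IsRoot.def, eval_map_algebraMap]
    exact aeval_eq_zero_of_mem_rootSet y.2
  refine MulAction.isPreprimitive_of_is_two_pretransitive (MulAction.is_two_pretransitive_iff.2 ?_)
  intro y z y' z' hyz hyz'
  obtain ⟨σ, hσy, hσz⟩ := exists_algEquiv_apply_eq_of_isRoot_abhyankarTrinomial hζ ht hT hK
    (hroot y) (hroot z) (Subtype.coe_ne_coe.2 hyz) (hroot y') (hroot z') (Subtype.coe_ne_coe.2 hyz')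
  let π : Equiv.Perm ((abhyankarTrinomial p t T).rootSet E) :=
    MulAction.toPermHom (E ≃ₐ[K] E) _ σ
  exact ⟨⟨π, σ, fun y => rfl⟩, Subtype.ext hσy, Subtype.ext hσz⟩

end DoubleTransitivity

section Norm

theorem dvd_mul_finrank_of_pow_mul_eq_algebraMap {R B : Type*} [CommRing R] [IsDomain R]
    [CommRing B] [Algebra R B] [Module.Free R B] {ϖ : R} (hϖ : Prime ϖ) {x e : B} (he : IsUnit e)
    {m N : ℕ} (hm : m ≠ 0) (h : x ^ m * e = algebraMap R B (ϖ ^ N)) :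
    m ∣ N * Module.finrank R B := by
  have hnorm := congrArg (Algebra.norm R) h
  rw [map_mul, map_pow, Algebra.norm_algebraMap, ← pow_mul] at hnorm
  have hdvd : Algebra.norm R x ∣ ϖ ^ (N * Module.finrank R B) :=
    (dvd_pow_self _ hm).trans (hnorm ▸ dvd_mul_right _ _)
  obtain ⟨i, -, hi⟩ := (dvd_prime_pow hϖ _).1 hdvd
  have hassoc : Associated (ϖ ^ (i * m)) (ϖ ^ (N * Module.finrank R B)) := by
    rw [pow_mul, ← hnorm]
    exact hi.symm.pow_pow.trans (associated_mul_unit_right _ _ (he.map _))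
  have hle {a b : ℕ} : ϖ ^ a ∣ ϖ ^ b → a ≤ b := (pow_dvd_pow_iff hϖ.ne_zero hϖ.not_isUnit).1
  exact Dvd.intro_left i (le_antisymm (hle hassoc.dvd) (hle hassoc.symm.dvd))

end Norm

section LocalRing

open IsLocalRing

variable {R : Type*} [CommRing R] [IsLocalRing R]

theorem isUnit_one_sub_of_pow_mem_map_maximalIdeal {B : Type*} [CommRing B] [Algebra R B]
    [Algebra.IsIntegral R B] {x : B} {d : ℕ}
    (hx : x ^ d ∈ (maximalIdeal R).map (algebraMap R B)) : IsUnit (1 - x) := by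
  by_contra hunit
  obtain ⟨𝔪, h𝔪, hmem⟩ := exists_max_ideal_of_mem_nonunits hunit
  have hle : (maximalIdeal R).map (algebraMap R B) ≤ 𝔪 := by
    rw [Ideal.map_le_iff_le_comap]
    exact (eq_maximalIdeal (Ideal.isMaximal_comap_of_isIntegral_of_isMaximal (R := R) 𝔪)).ge
  have hx𝔪 : x ∈ 𝔪 := h𝔪.isPrime.mem_of_pow_mem d (hle hx)
  exact h𝔪.ne_top ((Ideal.eq_top_iff_one 𝔪).2 (by simpa using 𝔪.add_mem hmem hx𝔪))

theorem root_pow_mem_map_maximalIdeal {q : R[X]} {d : ℕ} (hq : q.map (residue R) = X ^ d) :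
    AdjoinRoot.root q ^ d ∈ (maximalIdeal R).map (algebraMap R (AdjoinRoot q)) := by
  have hmem : X ^ d - q ∈ (maximalIdeal R).map (C : R →+* R[X]) := by
    rw [← ker_residue, ← ker_mapRingHom, RingHom.mem_ker]
    simp [hq]
  have := Ideal.mem_map_of_mem (AdjoinRoot.mk q) hmem
  rwa [Ideal.map_map, map_sub, AdjoinRoot.mk_self, sub_zero, map_pow, AdjoinRoot.mk_X] at this

theorem dvd_mul_natDegree_of_dvd_of_map_residue_eq [IsDomain R] {ϖ : R} (hϖ : Prime ϖ)
    {m t N d : ℕ} (hm : m ≠ 0) (ht : t ≠ 0) {q : R[X]} (hq : q.Monic)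
    (hdvd : q ∣ X ^ (m + t) - X ^ m + C (ϖ ^ N)) (hres : q.map (residue R) = X ^ d) :
    m ∣ N * q.natDegree := by
  have hfree : Module.Free R (AdjoinRoot q) := .of_basis (AdjoinRoot.powerBasis' hq).basis
  have hfin : Module.Finite R (AdjoinRoot q) := (AdjoinRoot.powerBasis' hq).finite
  have hrank : Module.finrank R (AdjoinRoot q) = q.natDegree := by
    rw [(AdjoinRoot.powerBasis' hq).finrank, AdjoinRoot.powerBasis'_dim]
  have hrel := AdjoinRoot.mk_eq_zero.2 hdvd
  simp only [pow_add, map_add, map_sub, map_mul, map_pow, AdjoinRoot.mk_X, AdjoinRoot.mk_C] at hrel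
  have hunit : IsUnit (1 - AdjoinRoot.root q ^ t) := by
    refine isUnit_one_sub_of_pow_mem_map_maximalIdeal (R := R) (d := d) ?_
    rw [pow_right_comm]
    exact Ideal.pow_mem_of_mem _ (root_pow_mem_map_maximalIdeal hres) t (pos_iff_ne_zero.2 ht)
  rw [← hrank]
  refine dvd_mul_finrank_of_pow_mul_eq_algebraMap hϖ hunit hm (x := AdjoinRoot.root q) ?_
  rw [AdjoinRoot.algebraMap_eq, map_pow]
  linear_combination -hrel

theorem dvd_mul_natDegree_minpoly_of_map_residue_eq [IsDomain R] [IsIntegrallyClosed R]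
    {M E : Type*} [Field M] [Field E] [Algebra R M] [IsFractionRing R M] [Algebra M E] [Algebra R E]
    [IsScalarTower R M E] {ϖ : R} (hϖ : Prime ϖ) {m t N d : ℕ} (hm : m ≠ 0) (ht : t ≠ 0)
    {h : R[X]} (hh : h.Monic) (hdvd : h ∣ X ^ (m + t) - X ^ m + C (ϖ ^ N))
    (hres : h.map (residue R) = X ^ d) {w : E} (hw : aeval w h = 0) :
    m ∣ N * (minpoly M w).natDegree := by
  have hint : IsIntegral R w := ⟨h, hh, hw⟩
  have hmonic := minpoly.monic hint
  have := FaithfulSMul.trans R M E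
  have hmin : minpoly R w ∣ h := minpoly.isIntegrallyClosed_dvd hint hw
  rw [minpoly.isIntegrallyClosed_eq_field_fractions' M hint, hmonic.natDegree_map]
  obtain ⟨j, -, hj⟩ := (dvd_prime_pow prime_X _).1 (hres ▸ Polynomial.map_dvd (residue R) hmin)
  exact dvd_mul_natDegree_of_dvd_of_map_residue_eq hϖ hm ht hmonic (hmin.trans hdvd)
    (eq_of_monic_of_associated (hmonic.map _) (monic_X_pow j) hj)

end LocalRing

section Hensel

open IsLocalRing

variable {R : Type*} [CommRing R]

theorem prod_X_sub_C_dvd_of_forall_isRoot [IsDomain R] {g : R[X]} (hg : g ≠ 0) {Z : Finset R}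
    (hZ : ∀ w ∈ Z, g.IsRoot w) : ∏ w ∈ Z, (X - C w) ∣ g := by
  rw [Finset.prod, Multiset.prod_X_sub_C_dvd_iff_le_roots hg, Multiset.le_iff_subset Z.nodup]
  exact fun w hw => (mem_roots hg).2 (hZ w hw)

theorem exists_finset_isRoot_of_simple_roots [HenselianLocalRing R] {g : R[X]} (hg : g.Monic)
    {A : Finset (ResidueField R)} (hroot : ∀ a ∈ A, aeval a g = 0)
    (hsimple : ∀ a ∈ A, aeval a (derivative g) ≠ 0) :
    ∃ Z : Finset R, Z.card = A.card ∧ (∀ w ∈ Z, g.IsRoot w) ∧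
      (∏ w ∈ Z, (X - C w)).map (residue R) = ∏ a ∈ A, (X - C a) := by
  have hlift := ((HenselianLocalRing.TFAE R).out 0 1).1 ‹HenselianLocalRing R›
  have hex (a) (ha : a ∈ A) : ∃ w : R, g.IsRoot w ∧ residue R w = a :=
    hlift g hg a (hroot a ha) (hsimple a ha)
  choose! w hw hres using hex
  have hinj : Set.InjOn w A := fun a ha b hb hab => by rw [← hres a ha, ← hres b hb, hab]
  refine ⟨A.image w, Finset.card_image_of_injOn hinj, by simpa using hw, ?_⟩
  rw [Finset.prod_image hinj, Polynomial.map_prod]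
  exact Finset.prod_congr rfl fun a ha => by simp [hres a ha]

theorem exists_finset_isRoot_and_eq_prod_mul [IsDomain R] [HenselianLocalRing R] {p t N : ℕ}
    {ζ : ResidueField R} (hζ : IsPrimitiveRoot ζ t) (ht : t ≠ 0) {ϖ : R}
    (hϖ : ϖ ∈ maximalIdeal R) (hN : N ≠ 0) :
    ∃ (Z : Finset R) (h : R[X]), Z.card = t ∧ h.Monic ∧ h.map (residue R) = X ^ p ∧
      X ^ (p + t) - X ^ p + C (ϖ ^ N) = (∏ w ∈ Z, (X - C w)) * h := by
  set g : R[X] := X ^ (p + t) - X ^ p + C (ϖ ^ N)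
  have : NeZero t := ⟨ht⟩
  have hg : g.Monic := by unfold g; monicity!; simp [ht]
  have hmap : g.map (residue R) = (X ^ t - 1) * X ^ p := by
    simp [g, (residue_eq_zero_iff ϖ).2 hϖ, hN, pow_add]
    ring
  have hmem {a : ResidueField R} (ha : a ∈ nthRootsFinset t 1) : a ^ t = 1 :=
    (mem_nthRootsFinset (NeZero.pos t) 1).1 ha
  obtain ⟨Z, hZcard, hZroot, hZmap⟩ :=
    exists_finset_isRoot_of_simple_roots hg (A := nthRootsFinset t 1)
      (fun a ha => by
        rw [aeval_def, ResidueField.algebraMap_eq, ← eval_map, hmap]; simp [hmem ha])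
      (fun a ha => by
        rw [aeval_def, ResidueField.algebraMap_eq, ← eval_map, ← derivative_map, hmap]
        have ha₀ : a ≠ 0 := by rintro rfl; simpa [ht] using hmem ha
        simp [derivative_X_pow, hmem ha, ha₀, hζ.neZero'.out])
  rw [← X_pow_sub_one_eq_prod (NeZero.pos t) hζ] at hZmap
  obtain ⟨h, hgh⟩ := prod_X_sub_C_dvd_of_forall_isRoot hg.ne_zero hZroot
  have hZmonic : (∏ w ∈ Z, (X - C w)).Monic := monic_prod_of_monic _ _ fun w _ => monic_X_sub_C w
  refine ⟨Z, h, hZcard.trans hζ.card_nthRootsFinset, hZmonic.of_mul_monic_left (hgh ▸ hg), ?_, hgh⟩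
  refine mul_left_cancel₀ (X_pow_sub_C_ne_zero (NeZero.pos t) (1 : ResidueField R)) ?_
  rw [C_1, ← hmap, ← hZmap, hgh, Polynomial.map_mul]

end Hensel

section InertiaAtInfinity

theorem exists_isCycle_mem_inducedPerm_of_dvd_card_gal {M E : Type*} [Field M] [Field E]
    [Algebra M E] [Normal M E] {f : M[X]} (hsep : f.Separable)
    (hs : (f.map (algebraMap M E)).Splits) {p : ℕ} [Fact p.Prime] (hp : p ∣ Nat.card f.Gal)
    {Z : Finset M} (hZ : ∀ z ∈ Z, f.IsRoot z) (hdeg : f.natDegree < 2 * p + Z.card) :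
    ∃ π ∈ inducedPerm M (f.rootSet E), π.IsCycle ∧ π.support.card = p := by
  have : Fact (f.map (algebraMap M E)).Splits := ⟨hs⟩
  have hp₀ : 0 < p := (Fact.out : p.Prime).pos
  obtain ⟨g, hg⟩ := exists_prime_orderOf_dvd_card' p hp
  set π := Gal.galActionHom f E g
  have hπ : orderOf π = p := (orderOf_injective _ (Gal.galActionHom_injective f E) g).trans hg
  have hmem : π ∈ inducedPerm M (f.rootSet E) :=
    range_galActionHom_eq_inducedPerm f E ▸ MonoidHom.mem_range.2 ⟨g, rfl⟩
  obtain ⟨σ, hσ⟩ := hmem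
  let ι : Z → f.rootSet E := fun z => ⟨algebraMap M E z, by
    simpa [mem_rootSet, hsep.ne_zero, aeval_algebraMap_apply_eq_algebraMap_eval] using hZ z z.2⟩
  have hι : Function.Injective ι := fun z z' h =>
    Subtype.ext ((algebraMap M E).injective (congrArg Subtype.val h))
  have hsupp : π.support ⊆ (Finset.univ.image ι)ᶜ := by
    refine Finset.subset_compl_comm.1 fun y hy => ?_
    obtain ⟨z, -, rfl⟩ := Finset.mem_image.1 hy
    rw [Finset.mem_compl, Equiv.Perm.notMem_support]
    exact Subtype.ext ((hσ (ι z)).symm.trans (σ.commutes z))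
  have hcard := Finset.card_le_card hsupp
  rw [Finset.card_compl, Finset.card_image_of_injective _ hι, Finset.card_univ, Fintype.card_coe,
    card_rootSet_eq_natDegree hsep hs] at hcard
  have hcycle : π.IsCycle := Equiv.Perm.isCycle_of_prime_order (hπ ▸ Fact.out) (by omega)
  exact ⟨π, ⟨σ, hσ⟩, hcycle, by rw [← hcycle.orderOf, hπ]⟩

-- The substitution that makes the trinomial integral at `T = ∞`, where `T = u ^ (-t)`: modulo `u`
-- the new equation is `w ^ p * (w ^ t - 1) = 0`.
theorem isRoot_abhyankarTrinomial_div_iff {F : Type*} [Field F] {p t : ℕ} {u w : F} (hu : u ≠ 0)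
    (hw : w ≠ 0) : (abhyankarTrinomial p t (u ^ t)⁻¹).IsRoot (u / w) ↔
      w ^ (p + t) - w ^ p + u ^ (p + t) = 0 := by
  have hscale : (u / w) ^ (p + t) - (u ^ t)⁻¹ * (u / w) ^ t + 1 =
      (w ^ (p + t) - w ^ p + u ^ (p + t)) / w ^ (p + t) := by
    rw [div_pow, div_pow, pow_add w, inv_mul_eq_div, div_right_comm, div_self (pow_ne_zero t hu)]
    field_simp
    ring
  rw [isRoot_abhyankarTrinomial_iff, hscale, div_eq_zero_iff,
    or_iff_left (pow_ne_zero (p + t) hw)]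

open IsLocalRing

variable {R M : Type*} [CommRing R] [IsDomain R] [HenselianLocalRing R] [IsIntegrallyClosed R]
  [Field M] [Algebra R M] [IsFractionRing R M] {p t : ℕ} [Fact p.Prime] {ζ : ResidueField R}
  {ϖ : R} (E : Type*) [Field E] [Algebra M E]

theorem exists_finset_forall_dvd_natDegree_minpoly [Algebra R E] [IsScalarTower R M E]
    (hζ : IsPrimitiveRoot ζ t) (ht : t ≠ 0) (hpt : ¬ p ∣ t) (hϖ : Prime ϖ) :
    ∃ Z : Finset R, Z.card = t ∧ (∀ v ∈ Z, v ^ (p + t) - v ^ p + ϖ ^ (p + t) = 0) ∧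
      ∀ w : E, w ^ (p + t) - w ^ p + algebraMap R E ϖ ^ (p + t) = 0 →
        (∀ v ∈ Z, w ≠ algebraMap R E v) → p ∣ (minpoly M w).natDegree := by
  have hp : p.Prime := Fact.out
  obtain ⟨Z, h, hZ, hh, hres, hfac⟩ := exists_finset_isRoot_and_eq_prod_mul (p := p) (N := p + t)
    hζ ht hϖ.not_isUnit (by omega)
  refine ⟨Z, hZ, fun v hv => ?_, fun w hw hwZ => ?_⟩
  · simpa [eval_prod, Finset.prod_eq_zero hv] using congrArg (eval v) hfac
  · have haeval : (∏ v ∈ Z, (w - algebraMap R E v)) * aeval w h = 0 := by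
      simpa [hw] using (congrArg (aeval w) hfac).symm
    have hprod : ∏ v ∈ Z, (w - algebraMap R E v) ≠ 0 :=
      Finset.prod_ne_zero_iff.2 fun v hv => sub_ne_zero.2 (hwZ v hv)
    have hdvd := dvd_mul_natDegree_minpoly_of_map_residue_eq (M := M) hϖ hp.ne_zero ht hh
      (Dvd.intro_left _ hfac.symm) hres ((mul_eq_zero.1 haeval).resolve_left hprod)
    exact (hp.dvd_mul.1 hdvd).resolve_left fun h => hpt ((Nat.dvd_add_right dvd_rfl).1 h)

theorem exists_finset_isRoot_abhyankarTrinomial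
    (hζ : IsPrimitiveRoot ζ t) (ht : t ≠ 0) (hpt : ¬ p ∣ t) (hϖ : Prime ϖ) :
    ∃ Z : Finset M, Z.card = t ∧
      (∀ z ∈ Z, (abhyankarTrinomial p t (algebraMap R M ϖ ^ t)⁻¹).IsRoot z) ∧
      ∀ y ∈ (abhyankarTrinomial p t (algebraMap R M ϖ ^ t)⁻¹).rootSet E,
        (∀ z ∈ Z, y ≠ algebraMap M E z) → ∃ w : E, p ∣ (minpoly M w).natDegree := by
  set u := algebraMap R M ϖ
  let _ : Algebra R E := ((algebraMap M E).comp (algebraMap R M)).toAlgebra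
  have : IsScalarTower R M E := .of_algebraMap_eq fun _ => rfl
  obtain ⟨Z, hZ, hroot, hdvd⟩ :=
    exists_finset_forall_dvd_natDegree_minpoly (M := M) (p := p) E hζ ht hpt hϖ
  have hM : Function.Injective (algebraMap R M) := FaithfulSMul.algebraMap_injective R M
  have hu : u ≠ 0 := (map_ne_zero_iff _ hM).2 hϖ.ne_zero
  have huE : algebraMap M E u ≠ 0 := (_root_.map_ne_zero _).2 hu
  have hv₀ {v} (hv : v ∈ Z) : algebraMap R M v ≠ 0 := by
    refine (map_ne_zero_iff _ hM).2 fun h₀ => ?_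
    simpa [h₀, (Fact.out : p.Prime).ne_zero, hϖ.ne_zero] using hroot v hv
  have hinj : Set.InjOn (fun v => u / algebraMap R M v) Z := fun v _ v' _ h => hM <| by
    rw [← div_div_cancel₀ hu (b := algebraMap R M v), ← div_div_cancel₀ hu (b := algebraMap R M v')]
    exact congrArg _ h
  refine ⟨Z.image _, (Finset.card_image_of_injOn hinj).trans hZ, ?_, fun y hy hyZ => ?_⟩
  · intro z hz
    obtain ⟨v, hv, rfl⟩ := Finset.mem_image.1 hz
    rw [isRoot_abhyankarTrinomial_div_iff hu (hv₀ hv)]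
    simpa using congrArg (algebraMap R M) (hroot v hv)
  · have hyroot : (abhyankarTrinomial p t (algebraMap M E u ^ t)⁻¹).IsRoot y := by
      rw [IsRoot.def, ← map_pow, ← map_inv₀, ← abhyankarTrinomial_map, eval_map_algebraMap]
      exact (mem_rootSet.1 hy).2
    have hw : algebraMap M E u / y ≠ 0 :=
      div_ne_zero huE (ne_zero_of_isRoot_abhyankarTrinomial ht hyroot)
    rw [← div_div_cancel₀ huE (b := y), isRoot_abhyankarTrinomial_div_iff huE hw] at hyroot
    refine ⟨_, hdvd _ hyroot fun v hv hwv => ?_⟩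
    refine hyZ _ (Finset.mem_image_of_mem _ hv) ?_
    rw [map_div₀, ← IsScalarTower.algebraMap_apply R M E v, ← hwv, div_div_cancel₀ huE]

theorem exists_isCycle_mem_inducedPerm_rootSet_abhyankarTrinomial [CharP M p] [Normal M E]
    (hζ : IsPrimitiveRoot ζ t) (ht : t ≠ 0) (hpt : ¬ p ∣ t) (hϖ : Prime ϖ)
    (hs : ((abhyankarTrinomial p t (algebraMap R M ϖ ^ t)⁻¹).map (algebraMap M E)).Splits) :
    ∃ π ∈ inducedPerm M ((abhyankarTrinomial p t (algebraMap R M ϖ ^ t)⁻¹).rootSet E),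
      π.IsCycle ∧ π.support.card = p := by
  have hp : p.Prime := Fact.out
  set f := abhyankarTrinomial p t (algebraMap R M ϖ ^ t)⁻¹
  have hsep : f.Separable :=
    abhyankarTrinomial_separable (mt (CharP.cast_eq_zero_iff M p t).1 hpt)
  have hdeg : f.natDegree = p + t := natDegree_abhyankarTrinomial hp.ne_zero _
  obtain ⟨Z, hZ, hroot, hdvd⟩ :=
    exists_finset_isRoot_abhyankarTrinomial (M := M) (p := p) f.SplittingField hζ ht hpt hϖ
  refine exists_isCycle_mem_inducedPerm_of_dvd_card_gal hsep hs ?_ hroot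
    (by rw [hdeg, hZ]; have := hp.pos; omega)
  have hcard : (Z.image (algebraMap M f.SplittingField)).card <
      (f.rootSet f.SplittingField).toFinset.card := by
    rw [Set.toFinset_card, card_rootSet_eq_natDegree hsep (SplittingField.splits f), hdeg]
    exact (Finset.card_image_le.trans_eq hZ).trans_lt (Nat.lt_add_of_pos_left hp.pos)
  obtain ⟨y, hy, hyZ⟩ := Finset.exists_mem_notMem_of_card_lt_card hcard
  obtain ⟨w, hw⟩ := hdvd y (Set.mem_toFinset.1 hy) fun z hz h =>
    hyZ (Finset.mem_image.2 ⟨z, hz, h.symm⟩)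
  rw [Gal.card_of_separable hsep]
  exact hw.trans (minpoly.degree_dvd (Algebra.IsIntegral.isIntegral w))

end InertiaAtInfinity

section PrimeCycle

open IsLocalRing

theorem henselianLocalRing_of_isAdicComplete {R : Type*} [CommRing R] [IsLocalRing R]
    [IsAdicComplete (maximalIdeal R) R] : HenselianLocalRing R where
  is_henselian f hf a ha ha' :=
    HenselianRing.is_henselian f hf a ha (ha'.map (Ideal.Quotient.mk (maximalIdeal R)))

theorem transcendental_powerSeries_X (k : Type*) [Field k] :
    Transcendental k (PowerSeries.X : PowerSeries k) := by
  have h : Function.Injective (Polynomial.coeToPowerSeries.algHom (R := k) k) := fun f g hfg => by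
    simpa [Polynomial.coeToPowerSeries.algHom_apply] using hfg
  simpa [Transcendental, Polynomial.coeToPowerSeries.algHom_apply] using
    (isAlgebraic_algHom_iff _ h).not.2 (transcendental_X k)

theorem exists_algHom_apply_eq_of_transcendental {k K M : Type*} [Field k] [Field K] [Field M]
    [Algebra k K] [Algebra k M] {T : K} {x : M} (hT : Transcendental k T)
    (hK : IntermediateField.adjoin k {T} = ⊤) (hx : Transcendental k x) :
    ∃ φ : K →ₐ[k] M, φ T = x := by
  obtain ⟨i, hi, -⟩ := exists_algHom_comp_eq_of_adjoin_eq_top (E := K) hK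
    (ψ := (IntermediateField.val _).comp (RatFunc.algEquivOfTranscendental T hT).toAlgHom)
    (τ := RatFunc.X) (by simp)
  exact ⟨((IntermediateField.val _).comp
    (RatFunc.algEquivOfTranscendental x hx).toAlgHom).comp i, by simp [hi]⟩

theorem alternatingGroup_le_range_galActionHom_abhyankarTrinomial_of_isCycle {p t : ℕ}
    {K : Type*} [Field K] [CharP K p] {T : K} {E E' : Type*} [Field E] [Algebra K E] [Field E']
    [Algebra K E'] [Fact ((abhyankarTrinomial p t T).map (algebraMap K E)).Splits]
    [Fact ((abhyankarTrinomial p t T).map (algebraMap K E')).Splits] (hp : p.Prime) (ht : 2 < t)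
    (hpt : ¬ p ∣ t)
    (hprim : MulAction.IsPreprimitive (Gal.galActionHom (abhyankarTrinomial p t T) E).range
      ((abhyankarTrinomial p t T).rootSet E))
    {π : Equiv.Perm ((abhyankarTrinomial p t T).rootSet E')}
    (hπ : π ∈ inducedPerm K ((abhyankarTrinomial p t T).rootSet E')) (hcycle : π.IsCycle)
    (hcard : π.support.card = p) :
    alternatingGroup ((abhyankarTrinomial p t T).rootSet E) ≤
      (Gal.galActionHom (abhyankarTrinomial p t T) E).range := by
  have hroots : Fintype.card ((abhyankarTrinomial p t T).rootSet E') = p + t := by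
    rw [card_rootSet_eq_natDegree (abhyankarTrinomial_separable
        (mt (CharP.cast_eq_zero_iff K p t).1 hpt)) Fact.out,
      natDegree_abhyankarTrinomial hp.ne_zero]
  exact alternatingGroup_le_range_galActionHom_of_le <|
    alternatingGroup_le_of_isPreprimitive_of_isCycle_mem
      (isPreprimitive_range_galActionHom_of_isPreprimitive hprim)
      (inducedPerm_le_range_galActionHom _ _ hπ) hcycle (by rwa [hcard]) (by lia)

variable {p t : ℕ} [Fact p.Prime] {K : Type*} [Field K] {T : K} {R M : Type*} [CommRing R]
  [IsDomain R] [HenselianLocalRing R] [IsIntegrallyClosed R] [Field M] [Algebra R M]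
  [IsFractionRing R M] [Algebra K M] [CharP M p] {ζ : ResidueField R} {ϖ : R}

theorem exists_isCycle_mem_inducedPerm_of_algebraMap_eq {Ω : Type*} [Field Ω] [Algebra K Ω]
    [Algebra M Ω] [IsScalarTower K M Ω] [Normal M Ω] (hζ : IsPrimitiveRoot ζ t) (ht : t ≠ 0)
    (hpt : ¬ p ∣ t) (hϖ : Prime ϖ) (hT : algebraMap K M T = (algebraMap R M ϖ ^ t)⁻¹)
    (hs : ((abhyankarTrinomial p t T).map (algebraMap K Ω)).Splits) :
    ∃ π ∈ inducedPerm K ((abhyankarTrinomial p t T).rootSet Ω),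
      π.IsCycle ∧ π.support.card = p := by
  have hmap : (abhyankarTrinomial p t T).map (algebraMap K M) =
      abhyankarTrinomial p t (algebraMap R M ϖ ^ t)⁻¹ := by rw [abhyankarTrinomial_map, hT]
  have hroots : (abhyankarTrinomial p t T).rootSet Ω =
      (abhyankarTrinomial p t (algebraMap R M ϖ ^ t)⁻¹).rootSet Ω := by
    rw [← hT, rootSet_abhyankarTrinomial_algebraMap]
  have hcycle (S : Set Ω) [Fintype S]
      (hS : S = (abhyankarTrinomial p t (algebraMap R M ϖ ^ t)⁻¹).rootSet Ω) :
      ∃ π ∈ inducedPerm M S, π.IsCycle ∧ π.support.card = p := by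
    subst hS
    convert exists_isCycle_mem_inducedPerm_rootSet_abhyankarTrinomial (M := M) Ω hζ ht hpt hϖ ?_
    rwa [← hmap, Polynomial.map_map, ← IsScalarTower.algebraMap_eq]
  obtain ⟨π, hπ, hπ'⟩ := hcycle _ hroots
  exact ⟨π, inducedPerm_le_inducedPerm hπ, hπ'⟩

end PrimeCycle

section FunctionField

open IsLocalRing

variable {k K : Type*} [Field k] [Field K] [Algebra k K] {p t : ℕ} [Fact p.Prime] [CharP k p]
  {ζ : k} {T : K} {E : Type*} [Field E] [Algebra K E]
  [Fact ((abhyankarTrinomial p t T).map (algebraMap K E)).Splits]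

theorem isPreprimitive_range_galActionHom_abhyankarTrinomial (hζ : IsPrimitiveRoot ζ t)
    (ht : 1 < t) (hT : Transcendental k T) (hK : IntermediateField.adjoin k {T} = ⊤) :
    MulAction.IsPreprimitive (Gal.galActionHom (abhyankarTrinomial p t T) E).range
      ((abhyankarTrinomial p t T).rootSet E) := by
  have : Fact ((abhyankarTrinomial p t T).map
      (algebraMap K (abhyankarTrinomial p t T).SplittingField)).Splits :=
    ⟨SplittingField.splits _⟩
  refine isPreprimitive_range_galActionHom_of_isPreprimitive
    (E := (abhyankarTrinomial p t T).SplittingField) ?_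
  rw [range_galActionHom_eq_inducedPerm]
  exact isPreprimitive_inducedPerm_rootSet_abhyankarTrinomial hζ ht hT hK

theorem alternatingGroup_le_range_galActionHom_abhyankarTrinomial (hζ : IsPrimitiveRoot ζ t)
    (ht : 2 < t) (hT : Transcendental k T) (hK : IntermediateField.adjoin k {T} = ⊤) :
    alternatingGroup ((abhyankarTrinomial p t T).rootSet E) ≤
      (Gal.galActionHom (abhyankarTrinomial p t T) E).range := by
  have hp : p.Prime := Fact.out
  have : NeZero t := ⟨by lia⟩
  have hpt : ¬ p ∣ t := mt (CharP.cast_eq_zero_iff k p t).2 hζ.neZero'.out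
  have : CharP K p := charP_of_injective_algebraMap (algebraMap k K).injective p
  let M := FractionRing (PowerSeries k)
  have : CharP M p := charP_of_injective_algebraMap (algebraMap k M).injective p
  have : IsAdicComplete (maximalIdeal (PowerSeries k)) (PowerSeries k) := by
    rw [PowerSeries.maximalIdeal_eq_span_X]
    infer_instance
  have : HenselianLocalRing (PowerSeries k) := henselianLocalRing_of_isAdicComplete
  have hu : Transcendental k (algebraMap (PowerSeries k) M PowerSeries.X ^ t)⁻¹ := by
    refine fun h => transcendental_powerSeries_X k ?_
    have := (IsAlgebraic.inv_iff.1 h).of_pow (NeZero.pos t)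
    exact (isAlgebraic_algebraMap_iff (IsFractionRing.injective _ M)).1 this
  obtain ⟨φ, hφ⟩ := exists_algHom_apply_eq_of_transcendental hT hK hu
  let _ : Algebra K M := φ.toRingHom.toAlgebra
  have hζ' : IsPrimitiveRoot (algebraMap k (ResidueField (PowerSeries k)) ζ) t :=
    hζ.map_of_injective (algebraMap k _).injective
  obtain ⟨π, hπ, hcycle, hcard⟩ := exists_isCycle_mem_inducedPerm_of_algebraMap_eq
    (Ω := AlgebraicClosure M) hζ' (NeZero.ne t) hpt PowerSeries.X_prime hφ (IsAlgClosed.splits _)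
  have : Fact ((abhyankarTrinomial p t T).map (algebraMap K (AlgebraicClosure M))).Splits :=
    ⟨IsAlgClosed.splits _⟩
  exact alternatingGroup_le_range_galActionHom_abhyankarTrinomial_of_isCycle hp ht hpt
    (isPreprimitive_range_galActionHom_abhyankarTrinomial hζ (by lia) hT hK) hπ hcycle hcard

end FunctionField

section Descent

theorem exists_algebraMap_eq_of_pow_eq_one {k Ω : Type*} [Field k] [IsSepClosed k] [Field Ω]
    [Algebra k Ω] {s : ℕ} (hs : s ≠ 0) {z : Ω} (hz : z ^ s = 1) :
    ∃ c : k, algebraMap k Ω c = z := by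
  obtain ⟨q, hq⟩ := ExpChar.exists k
  have : ExpChar Ω q := expChar_of_injective_algebraMap (algebraMap k Ω).injective q
  obtain ⟨e, m, hm, rfl⟩ : ∃ e m : ℕ, (m : k) ≠ 0 ∧ s = q ^ e * m := by
    cases hq with
    | zero => exact ⟨0, s, Nat.cast_ne_zero.2 hs, by simp⟩
    | prime hq =>
      obtain ⟨e, m, hm, hsm⟩ := Nat.exists_eq_pow_mul_and_not_dvd hs q hq.ne_one
      exact ⟨e, m, mt (CharP.cast_eq_zero_iff k q m).1 hm, hsm⟩
  have : NeZero (m : k) := ⟨hm⟩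
  have : NeZero m := .of_neZero_natCast k
  obtain ⟨ξ, hξ⟩ := HasEnoughRootsOfUnity.exists_primitiveRoot k m
  rw [ExpChar.pow_prime_pow_mul_eq_one_iff] at hz
  obtain ⟨i, -, rfl⟩ := (hξ.map_of_injective (algebraMap k Ω).injective).eq_pow_of_pow_eq_one hz
  exact ⟨ξ ^ i, map_pow _ _ _⟩

variable {k K L : Type*} [Field k] [Field K] [Field L] [Algebra k K] [Algebra k L] [Algebra K L]
  {x : L} {s : ℕ}

theorem isAlgebraic_of_adjoin_eq_top_of_pow_mem_range [IsScalarTower k K L]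
    (hx : IntermediateField.adjoin k {x} = ⊤) (hs : s ≠ 0) (hxs : x ^ s ∈ (algebraMap K L).range) :
    Algebra.IsAlgebraic K L := by
  have hx' : IsAlgebraic K x := by
    obtain ⟨c, hc⟩ := hxs
    exact .of_pow (Nat.pos_of_ne_zero hs) (hc ▸ isAlgebraic_algebraMap c)
  have hxK : IntermediateField.adjoin K {x} = ⊤ := by
    rw [← IntermediateField.restrictScalars_eq_top_iff (K := k), eq_top_iff, ← hx,
      IntermediateField.adjoin_simple_le_iff]
    exact IntermediateField.mem_adjoin_simple_self K x
  have := IntermediateField.isAlgebraic_adjoin_simple hx'.isIntegral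
  rw [hxK] at this
  exact (IntermediateField.topEquiv (F := K) (E := L)).isAlgebraic

theorem algEquiv_apply_comm_of_pow_mem_range {Ω : Type*} [Field Ω] [Algebra k Ω] [Algebra K Ω]
    [Algebra L Ω] [IsScalarTower k K Ω] [IsScalarTower k L Ω] [IsScalarTower K L Ω]
    [IsSepClosed k] (hx : IntermediateField.adjoin k {x} = ⊤) (hs : s ≠ 0)
    (hxs : x ^ s ∈ (algebraMap K L).range) (σ τ : Ω ≃ₐ[K] Ω) (y : L) :
    σ (τ (algebraMap L Ω y)) = τ (σ (algebraMap L Ω y)) := by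
  have hmul (σ : Ω ≃ₐ[K] Ω) :
      ∃ c : k, σ (algebraMap L Ω x) = algebraMap k Ω c * algebraMap L Ω x := by
    rcases eq_or_ne x 0 with rfl | hx₀
    · exact ⟨0, by simp⟩
    have hx₁ : algebraMap L Ω x ≠ 0 := (_root_.map_ne_zero _).2 hx₀
    have hpow : (σ (algebraMap L Ω x) / algebraMap L Ω x) ^ s = 1 := by
      obtain ⟨c, hc⟩ := hxs
      rw [div_pow, ← map_pow, ← map_pow, ← hc, ← IsScalarTower.algebraMap_apply, σ.commutes,
        div_self]
      rw [IsScalarTower.algebraMap_apply K L Ω, hc, map_pow]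
      exact pow_ne_zero s hx₁
    obtain ⟨c, hc⟩ := exists_algebraMap_eq_of_pow_eq_one (k := k) hs hpow
    exact ⟨c, by rw [hc, div_mul_cancel₀ _ hx₁]⟩
  obtain ⟨c, hc⟩ := hmul σ
  obtain ⟨d, hd⟩ := hmul τ
  let σ' := σ.restrictScalars k
  let τ' := τ.restrictScalars k
  have hcomm : σ' (τ' (algebraMap L Ω x)) = τ' (σ' (algebraMap L Ω x)) := by
    have hσ : σ' (algebraMap L Ω x) = algebraMap k Ω c * algebraMap L Ω x := hc
    have hτ : τ' (algebraMap L Ω x) = algebraMap k Ω d * algebraMap L Ω x := hd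
    rw [hσ, hτ, map_mul, map_mul, AlgEquiv.commutes, AlgEquiv.commutes, hσ, hτ, mul_left_comm]
  exact DFunLike.congr_fun (algHom_ext_of_adjoin_eq_top hx
    (φ := (σ'.toAlgHom.comp τ'.toAlgHom).comp (IsScalarTower.toAlgHom k L Ω))
    (φ' := (τ'.toAlgHom.comp σ'.toAlgHom).comp (IsScalarTower.toAlgHom k L Ω)) hcomm) y

variable [IsSepClosed k] {p t : ℕ} [Fact p.Prime] [CharP k p] [NeZero (t : k)] {T : K}

theorem alternatingGroup_le_inducedPerm_abhyankarTrinomial {Ω : Type*} [Field Ω] [Algebra k Ω]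
    [Algebra K Ω] [Algebra L Ω] [IsScalarTower k K Ω] [IsScalarTower k L Ω] [IsScalarTower K L Ω]
    [Normal K Ω] (hsplits : ((abhyankarTrinomial p t T).map (algebraMap K Ω)).Splits)
    (ht : 2 < t) (hT : Transcendental k T) (hK : IntermediateField.adjoin k {T} = ⊤)
    (hx : IntermediateField.adjoin k {x} = ⊤) (hs : s ≠ 0) (hxs : x ^ s ∈ (algebraMap K L).range) :
    alternatingGroup ((abhyankarTrinomial p t T).rootSet Ω) ≤
      inducedPerm L ((abhyankarTrinomial p t T).rootSet Ω) := by
  have hp : p.Prime := Fact.out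
  have : Fact ((abhyankarTrinomial p t T).map (algebraMap K Ω)).Splits := ⟨hsplits⟩
  have : NeZero t := .of_neZero_natCast k
  have htK : (t : K) ≠ 0 := by
    simpa using (_root_.map_ne_zero (algebraMap k K)).2 (NeZero.ne (t : k))
  have : CharP K p := charP_of_injective_algebraMap (algebraMap k K).injective p
  obtain ⟨ζ, hζ⟩ := HasEnoughRootsOfUnity.exists_primitiveRoot k t
  refine alternatingGroup_le_inducedPerm_of_forall_comm (K := K) ?_
    (algEquiv_apply_comm_of_pow_mem_range hx hs hxs) ?_
  · rw [card_rootSet_eq_natDegree (abhyankarTrinomial_separable htK) hsplits,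
      natDegree_abhyankarTrinomial hp.ne_zero]
    linarith [hp.two_le]
  · rw [← range_galActionHom_eq_inducedPerm]
    exact alternatingGroup_le_range_galActionHom_abhyankarTrinomial hζ ht hT hK

theorem alternatingGroup_le_range_galActionHom_abhyankarTrinomial_of_algebraMap_eq
    [IsScalarTower k K L] {E : Type*} [Field E] [Algebra L E] {T' : L}
    [Fact ((abhyankarTrinomial p t T').map (algebraMap L E)).Splits] (hT' : algebraMap K L T = T')
    (ht : 2 < t) (hT : Transcendental k T) (hK : IntermediateField.adjoin k {T} = ⊤)
    (hx : IntermediateField.adjoin k {x} = ⊤) (hs : s ≠ 0) (hxs : x ^ s ∈ (algebraMap K L).range) :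
    alternatingGroup ((abhyankarTrinomial p t T').rootSet E) ≤
      (Gal.galActionHom (abhyankarTrinomial p t T') E).range := by
  subst hT'
  let Ω := AlgebraicClosure L
  have : Algebra.IsAlgebraic K L := isAlgebraic_of_adjoin_eq_top_of_pow_mem_range hx hs hxs
  have : Algebra.IsAlgebraic K Ω := .trans K L Ω
  have : Normal K Ω := normal_iff.2 fun y => ⟨Algebra.IsIntegral.isIntegral y, IsAlgClosed.splits _⟩
  have : Fact ((abhyankarTrinomial p t (algebraMap K L T)).map (algebraMap L Ω)).Splits :=
    ⟨IsAlgClosed.splits _⟩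
  have hΩ (S : Set Ω) [Fintype S] (hS : S = (abhyankarTrinomial p t T).rootSet Ω) :
      alternatingGroup S ≤ inducedPerm L S := by
    subst hS
    convert alternatingGroup_le_inducedPerm_abhyankarTrinomial (Ω := Ω) (L := L)
      (IsAlgClosed.splits _) ht hT hK hx hs hxs
  exact alternatingGroup_le_range_galActionHom_of_le
    ((hΩ _ (rootSet_abhyankarTrinomial_algebraMap p t T Ω)).trans
      (inducedPerm_le_range_galActionHom _ _))

end Descent

section RationalFunctionField

open IntermediateField

theorem adjoin_adjoinSimple_gen {k L : Type*} [Field k] [Field L] [Algebra k L] (T : L) :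
    adjoin k {AdjoinSimple.gen k T} = ⊤ := by
  refine map_injective (k⟮T⟯.val) ?_
  rw [adjoin_map, Set.image_singleton, coe_val, AdjoinSimple.coe_gen, ← AlgHom.fieldRange_eq_map,
    fieldRange_val]

theorem alternatingGroup_le_range_galActionHom_abhyankarTrinomial_of_pow_mem_adjoin
    {k L E : Type*} [Field k] [IsSepClosed k] [Field L] [Algebra k L] [Field E] [Algebra L E]
    {p t s : ℕ} [Fact p.Prime] [CharP k p] [NeZero (t : k)] {x T : L}
    [Fact ((abhyankarTrinomial p t T).map (algebraMap L E)).Splits] (ht : 2 < t)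
    (hT : Transcendental k T) (hx : k⟮x⟯ = ⊤) (hs : s ≠ 0) (hxs : x ^ s ∈ k⟮T⟯) :
    alternatingGroup ((abhyankarTrinomial p t T).rootSet E) ≤
      (Gal.galActionHom (abhyankarTrinomial p t T) E).range := by
  have hgen : Transcendental k (AdjoinSimple.gen k T) := fun h => hT (h.algebraMap (A := L))
  exact alternatingGroup_le_range_galActionHom_abhyankarTrinomial_of_algebraMap_eq
    (AdjoinSimple.algebraMap_gen k T) ht hgen (adjoin_adjoinSimple_gen T) hx hs ⟨⟨_, hxs⟩, rfl⟩

variable {k : Type*} [Field k] {a : k}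

theorem transcendental_algebraMap_mul_X_pow (ha : a ≠ 0) {s : ℕ} (hs : s ≠ 0) :
    Transcendental k (algebraMap k (RatFunc k) a * RatFunc.X ^ s) := by
  intro h
  have hX := (isAlgebraic_algebraMap a).inv.mul h
  rw [inv_mul_cancel_left₀ ((_root_.map_ne_zero _).2 ha)] at hX
  exact RatFunc.transcendental_X (hX.of_pow (Nat.pos_of_ne_zero hs))

theorem X_pow_mem_adjoin_algebraMap_mul_X_pow (ha : a ≠ 0) (s : ℕ) :
    (RatFunc.X : RatFunc k) ^ s ∈ k⟮algebraMap k (RatFunc k) a * RatFunc.X ^ s⟯ := by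
  set K := k⟮algebraMap k (RatFunc k) a * RatFunc.X ^ s⟯
  have hX := K.mul_mem (K.inv_mem (K.algebraMap_mem a)) (mem_adjoin_simple_self k _)
  rwa [inv_mul_cancel_left₀ ((_root_.map_ne_zero _).2 ha)] at hX

end RationalFunctionField

theorem stmt_4_general (p : ℕ) (hp : p.Prime) (hodd : Odd p)
    (t : ℕ) (ht : 2 < t) (hpt : ¬ p ∣ t)
    (k : Type*) [Field k] [IsSepClosed k] [CharP k p]
    (n : ℕ) (hn : n = p + t)
    (a : k) (ha : a ≠ 0) (s : ℕ) (hs : 0 < s)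
    (f : Polynomial (RatFunc k))
    (hf : f = X ^ n - C (algebraMap k (RatFunc k) a * RatFunc.X ^ s) * X ^ t + 1) :
    haveI : Fact ((f.map (algebraMap (RatFunc k) f.SplittingField)).Splits) :=
      ⟨SplittingField.splits f⟩
    Fintype.card (f.rootSet f.SplittingField) = n ∧
      (Polynomial.Gal.galActionHom f f.SplittingField).range =
        alternatingGroup (f.rootSet f.SplittingField) := by
  have hp₂ : ¬ p ∣ 2 := fun h => by
    rw [(Nat.prime_dvd_prime_iff_eq hp Nat.prime_two).1 h] at hodd
    exact absurd hodd (by decide)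
  have : Fact p.Prime := ⟨hp⟩
  have : NeZero (2 : k) := ⟨mod_cast mt (CharP.cast_eq_zero_iff k p 2).1 hp₂⟩
  have : NeZero (t : k) := ⟨mt (CharP.cast_eq_zero_iff k p t).1 hpt⟩
  have : CharP (RatFunc k) p := charP_of_injective_algebraMap (algebraMap k (RatFunc k)).injective p
  have ht₀ : (t : RatFunc k) ≠ 0 := mt (CharP.cast_eq_zero_iff _ p t).1 hpt
  set T := algebraMap k (RatFunc k) a * RatFunc.X ^ s
  obtain rfl : f = abhyankarTrinomial p t T := by rw [hf, hn, abhyankarTrinomial]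
  have hsplits := SplittingField.splits (abhyankarTrinomial p t T)
  have : Fact ((abhyankarTrinomial p t T).map
      (algebraMap (RatFunc k) (abhyankarTrinomial p t T).SplittingField)).Splits := ⟨hsplits⟩
  refine ⟨?_, le_antisymm ?_ ?_⟩
  · rw [card_rootSet_eq_natDegree (abhyankarTrinomial_separable ht₀) hsplits,
      natDegree_abhyankarTrinomial hp.ne_zero, hn]
  · rw [range_galActionHom_eq_inducedPerm]
    exact inducedPerm_rootSet_abhyankarTrinomial_le_alternatingGroup k hp.ne_zero ht₀ hsplits
  · exact alternatingGroup_le_range_galActionHom_abhyankarTrinomial_of_pow_mem_adjoin ht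
      (transcendental_algebraMap_mul_X_pow ha hs.ne') RatFunc.adjoin_X hs.ne'
      (X_pow_mem_adjoin_algebraMap_mul_X_pow ha s)

/-- Abhyankar: over an algebraically closed field `k` of odd characteristic
`p`, with `t > 2` not divisible by `p` and `n = p + t`, the polynomial
`Y^n - a·X^s·Y^t + 1` over `k(X)` has `n` distinct roots in its splitting
field, and the image of its Galois group in the permutation group of the set
of roots is exactly the alternating group on those roots. -/
theorem stmt_4 (p : ℕ) (hp : p.Prime) (hodd : Odd p)
    (t : ℕ) (ht : 2 < t) (hpt : ¬ p ∣ t)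
    (k : Type*) [Field k] [IsAlgClosed k] [CharP k p]
    (n : ℕ) (hn : n = p + t)
    (a : k) (ha : a ≠ 0) (s : ℕ) (hs : 0 < s)
    (f : Polynomial (RatFunc k))
    (hf : f = X ^ n - C (algebraMap k (RatFunc k) a * RatFunc.X ^ s) * X ^ t + 1) :
    haveI : Fact ((f.map (algebraMap (RatFunc k) f.SplittingField)).Splits) :=
      ⟨SplittingField.splits f⟩
    Fintype.card (f.rootSet f.SplittingField) = n ∧
      (Polynomial.Gal.galActionHom f f.SplittingField).range =
        alternatingGroup (f.rootSet f.SplittingField) :=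
  stmt_4_general p hp hodd t ht hpt k n hn a ha s hs f hf
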